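/- arXiv:2101.06331 — 6 statements merged into one kernel-verified Lean document; each statement's English description precedes it below -/
import Mathlib

section
/- Let (σ_j)_{j≥1} be a sequence of positive real numbers, ω_j = ω(σ_j), and let n_d(ε) be the average case approximation complexity built from (ω_j). Then the following three conditions are equivalent: (i) for every ε ∈ (0,1), sup_{d∈ℕ} n_d(ε) < ∞; (ii) the series Σ_{j=1}^∞ ω_j converges; (iii) the series Σ_{j=1}^∞ σ_j^{-2} converges. -/
open Filter Set

/-- `ω(σ) = (1 + (σ²/2)(1 + √(1 + 4/σ²)))⁻¹`. -/
noncomputable def omegaFn (σ : ℝ) : ℝ :=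
  (1 + σ ^ 2 / 2 * (1 + Real.sqrt (1 + 4 / σ ^ 2)))⁻¹

/-- The average case approximation complexity `n_d(ε)` built from the sequence `ω`:
the minimal number `n ≥ 1` such that some finite set `S` of multi-indices with `|S| ≤ n`
captures all but `ε²` of the total mass of the eigenvalues
`λ_d(k) = ∏_{j<d} (1 - ω_j) ω_j^{k_j}`, `k : Fin d → ℕ`. -/
noncomputable def avgComplexity (ω : ℕ → ℝ) (d : ℕ) (ε : ℝ) : ℕ :=
  sInf {n : ℕ | 1 ≤ n ∧ ∃ S : Finset (Fin d → ℕ), S.card ≤ n ∧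
    ∑' k : {k : Fin d → ℕ // k ∉ S}, ∏ j : Fin d, (1 - ω j.1) * ω j.1 ^ k.1 j ≤ ε ^ 2}

/-!
Put `x = σ² / 2 * (1 + √(1 + 4 / σ²))`, the positive root of `x² = σ² (1 + x)`. Then
`ω(σ) = 1 / (1 + x)`, which gives `ω(σ) / (1 - ω(σ))² = σ⁻²`, and the factor `(1 - ω)²` does not
affect convergence.

The largest eigenvalue is `∏ j < d, (1 - ω j) ≤ exp (-∑ j < d, ω j)`, so capturing the mass `1 - ε²`
takes at least `(1 - ε²) exp (∑ j < d, ω j)` eigenvalues. Conversely, the box `{k | ∀ j, k j < N j}`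
misses a mass of at most `∑ j < d, ω j ^ N j`. Taking `N j = M` for `j < M` and `N j = 1` otherwise,
the box has at most `M ^ M` elements for every `d`, and when `ω` is summable the bound on the missed
mass tends to `0` as `M → ∞`, uniformly in `d`, by dominated convergence.
-/

theorem one_sub_sum_le_prod_one_sub {ι R : Type*} [CommRing R] [LinearOrder R]
    [IsStrictOrderedRing R] {s : Finset ι} {f : ι → R} (hf : ∀ i ∈ s, f i ∈ Icc 0 1) :
    1 - ∑ i ∈ s, f i ≤ ∏ i ∈ s, (1 - f i) := by
  induction s using Finset.cons_induction with
  | empty => simp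
  | cons a s ha ih =>
    rw [Finset.forall_mem_cons] at hf
    have ih := ih hf.2
    have prod_le_one : ∏ i ∈ s, (1 - f i) ≤ 1 :=
      Finset.prod_le_one (fun i hi => sub_nonneg.2 (hf.2 i hi).2)
        fun i hi => sub_le_self 1 (hf.2 i hi).1
    rw [Finset.sum_cons, Finset.prod_cons]
    linarith [mul_le_mul_of_nonneg_left prod_le_one hf.1.1]

theorem prod_one_sub_le_exp_neg_sum {ι : Type*} {s : Finset ι} {f : ι → ℝ}
    (hf : ∀ i ∈ s, f i ≤ 1) : ∏ i ∈ s, (1 - f i) ≤ Real.exp (-∑ i ∈ s, f i) := by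
  rw [← Finset.sum_neg_distrib, Real.exp_sum]
  exact Finset.prod_le_prod (fun i hi => sub_nonneg.2 (hf i hi))
    fun i _ => Real.one_sub_le_exp_neg (f i)

theorem tendsto_piFinset_atTop {ι : Type*} [Fintype ι] [DecidableEq ι] {κ : ι → Type*} :
    Tendsto (Fintype.piFinset : (∀ i, Finset (κ i)) → Finset (∀ i, κ i)) atTop atTop := by
  classical
  refine tendsto_atTop_atTop_of_monotone (fun s t h => Fintype.piFinset_subset s t h) fun u => ?_
  exact ⟨fun i => u.image fun k => k i,
    fun k hk => Fintype.mem_piFinset.2 fun i => Finset.mem_image_of_mem _ hk⟩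

theorem hasSum_pi_prod {ι : Type*} [Fintype ι] {κ : ι → Type*} {f : ∀ i, κ i → ℝ} {a : ι → ℝ}
    (hf : ∀ i k, 0 ≤ f i k) (ha : ∀ i, HasSum (f i) (a i)) :
    HasSum (fun k : ∀ i, κ i => ∏ i, f i (k i)) (∏ i, a i) := by
  classical
  have box_sum (t : ∀ i, Finset (κ i)) :
      ∑ k ∈ Fintype.piFinset t, ∏ i, f i (k i) = ∏ i, ∑ k ∈ t i, f i k :=
    (Finset.prod_univ_sum t f).symm
  have nonneg (k : ∀ i, κ i) : 0 ≤ ∏ i, f i (k i) := Finset.prod_nonneg fun i _ => hf i (k i)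
  have summable : Summable fun k : ∀ i, κ i => ∏ i, f i (k i) := by
    refine summable_of_sum_le (c := ∏ i, a i) nonneg fun u => ?_
    obtain ⟨t, hut⟩ := (tendsto_piFinset_atTop.eventually_ge_atTop u).exists
    calc ∑ k ∈ u, ∏ i, f i (k i)
        ≤ ∑ k ∈ Fintype.piFinset t, ∏ i, f i (k i) :=
          Finset.sum_le_sum_of_subset_of_nonneg hut fun k _ _ => nonneg k
      _ = ∏ i, ∑ k ∈ t i, f i k := box_sum t
      _ ≤ ∏ i, a i := Finset.prod_le_prod (fun i _ => Finset.sum_nonneg fun k _ => hf i k)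
          fun i _ => sum_le_hasSum (t i) (fun k _ => hf i k) (ha i)
  have box_tendsto : Tendsto (fun t : ∀ i, Finset (κ i) =>
      ∑ k ∈ Fintype.piFinset t, ∏ i, f i (k i)) atTop (nhds (∏ i, a i)) := by
    simp only [box_sum]
    refine tendsto_finsetProd _ fun i _ => (ha i).comp ?_
    exact tendsto_atTop_atTop_of_monotone (fun s t h => h i)
      fun u => (Function.surjective_eval i u).imp fun t ht => ht.ge
  rw [← tendsto_nhds_unique (summable.hasSum.comp tendsto_piFinset_atTop) box_tendsto]
  exact summable.hasSum

theorem summable_div_one_sub_sq_iff {ι : Type*} {ω : ι → ℝ} (hω : ∀ i, ω i ∈ Ico 0 1) :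
    Summable (fun i => ω i / (1 - ω i) ^ 2) ↔ Summable ω := by
  refine ⟨fun h => h.of_nonneg_of_le (fun i => (hω i).1) fun i => ?_, fun h => ?_⟩
  · have one_sub_pos : 0 < 1 - ω i := sub_pos.2 (hω i).2
    exact le_div_self (hω i).1 (pow_pos one_sub_pos 2)
      (pow_le_one₀ one_sub_pos.le (sub_le_self 1 (hω i).1))
  · have tendsto : Tendsto (fun i => ((1 - ω i) ^ 2)⁻¹) cofinite (nhds ((1 - 0) ^ 2)⁻¹) :=
      ((h.tendsto_cofinite_zero.const_sub 1).pow 2).inv₀ (by norm_num)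
    simpa only [div_eq_mul_inv] using h.norm.mul_tendsto_const tendsto

section OmegaFn

variable {σ : ℝ}

theorem exists_sq_eq_and_omegaFn_eq (hσ : σ ≠ 0) :
    ∃ x > 0, x ^ 2 = σ ^ 2 * (1 + x) ∧ omegaFn σ = (1 + x)⁻¹ := by
  refine ⟨σ ^ 2 / 2 * (1 + √(1 + 4 / σ ^ 2)), by positivity, ?_, rfl⟩
  have sq_sqrt : √(1 + 4 / σ ^ 2) ^ 2 = 1 + 4 / σ ^ 2 := Real.sq_sqrt (by positivity)
  rw [mul_pow, add_sq, sq_sqrt]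
  field_simp
  ring

theorem omegaFn_mem_Ioo (hσ : σ ≠ 0) : omegaFn σ ∈ Ioo 0 1 := by
  obtain ⟨x, hx, -, hω⟩ := exists_sq_eq_and_omegaFn_eq hσ
  rw [hω]
  exact ⟨by positivity, inv_lt_one_of_one_lt₀ (by linarith)⟩

theorem omegaFn_div_one_sub_sq (hσ : σ ≠ 0) :
    omegaFn σ / (1 - omegaFn σ) ^ 2 = (σ ^ 2)⁻¹ := by
  obtain ⟨x, hx, hx_sq, hω⟩ := exists_sq_eq_and_omegaFn_eq hσ
  have one_sub : 1 - (1 + x)⁻¹ = x / (1 + x) := by field_simp; ring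
  rw [hω, one_sub, div_pow, hx_sq]
  field_simp

end OmegaFn

/-- The eigenvalue `λ_d(k)` of the covariance operator of the tensor product random field `Y_d`,
with the multi-index `k` and the coordinates `j < d` counted from `0`. -/
noncomputable def tensorEigenvalue (ω : ℕ → ℝ) {d : ℕ} (k : Fin d → ℕ) : ℝ :=
  ∏ j : Fin d, (1 - ω j) * ω j ^ k j

section Complexity

variable {ω : ℕ → ℝ} {d : ℕ} {ε : ℝ}

theorem hasSum_tensorEigenvalue (hω : ∀ j, ω j ∈ Ico 0 1) :
    HasSum (fun k : Fin d → ℕ => tensorEigenvalue ω k) 1 := by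
  have factor_hasSum (j : ℕ) : HasSum (fun n => (1 - ω j) * ω j ^ n) 1 := by
    simpa only [mul_inv_cancel₀ (sub_pos.2 (hω j).2).ne'] using
      (hasSum_geometric_of_lt_one (hω j).1 (hω j).2).mul_left (1 - ω j)
  simpa only [tensorEigenvalue, Finset.prod_const_one] using
    hasSum_pi_prod (ι := Fin d) (f := fun j n => (1 - ω j) * ω j ^ n)
      (fun j n => mul_nonneg (sub_nonneg.2 (hω j).2.le) (pow_nonneg (hω j).1 n))
      fun j => factor_hasSum j

theorem tensorEigenvalue_le_prod_one_sub (hω : ∀ j, ω j ∈ Icc 0 1) (k : Fin d → ℕ) :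
    tensorEigenvalue ω k ≤ ∏ j : Fin d, (1 - ω j) :=
  Finset.prod_le_prod
    (fun j _ => mul_nonneg (sub_nonneg.2 (hω j).2) (pow_nonneg (hω j).1 (k j)))
    fun j _ => mul_le_of_le_one_right (sub_nonneg.2 (hω j).2) (pow_le_one₀ (hω j).1 (hω j).2)

theorem sum_piFinset_range_tensorEigenvalue (ω : ℕ → ℝ) (N : Fin d → ℕ) :
    ∑ k ∈ Fintype.piFinset fun j => Finset.range (N j), tensorEigenvalue ω k =
      ∏ j : Fin d, (1 - ω j ^ N j) := by
  simp only [tensorEigenvalue, ← mul_neg_geom_sum, Finset.mul_sum, Finset.prod_univ_sum]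

theorem tsum_notMem_tensorEigenvalue_le_iff (hω : ∀ j, ω j ∈ Ico 0 1) (S : Finset (Fin d → ℕ)) :
    ∑' k : {k : Fin d → ℕ // k ∉ S}, tensorEigenvalue ω k.1 ≤ ε ^ 2 ↔
      1 - ε ^ 2 ≤ ∑ k ∈ S, tensorEigenvalue ω k := by
  have total_mass := hasSum_tensorEigenvalue (d := d) hω
  have split := total_mass.summable.sum_add_tsum_subtype_compl S
  rw [total_mass.tsum_eq] at split
  rw [← split, sub_le_iff_le_add, add_le_add_iff_left]

theorem avgComplexity_le_card (hω : ∀ j, ω j ∈ Ico 0 1) {S : Finset (Fin d → ℕ)}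
    (hS : S.Nonempty) (hmass : 1 - ε ^ 2 ≤ ∑ k ∈ S, tensorEigenvalue ω k) :
    avgComplexity ω d ε ≤ S.card :=
  Nat.sInf_le
    ⟨hS.card_pos, S, le_rfl, (tsum_notMem_tensorEigenvalue_le_iff hω S).2 hmass⟩

theorem exists_card_le_avgComplexity (hω : ∀ j, ω j ∈ Ico 0 1) (d : ℕ) (hε : ε ≠ 0) :
    ∃ S : Finset (Fin d → ℕ), S.card ≤ avgComplexity ω d ε ∧
      1 - ε ^ 2 ≤ ∑ k ∈ S, tensorEigenvalue ω k := by
  have one_sub_lt : 1 - ε ^ 2 < 1 := sub_lt_self 1 (by positivity)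
  obtain ⟨T, hT⟩ :=
    ((hasSum_tensorEigenvalue (d := d) hω).eventually (lt_mem_nhds one_sub_lt)).exists
  obtain ⟨-, S, hS, htail⟩ := Nat.sInf_mem (s := {n : ℕ | 1 ≤ n ∧ ∃ S : Finset (Fin d → ℕ),
      S.card ≤ n ∧ ∑' k : {k : Fin d → ℕ // k ∉ S}, tensorEigenvalue ω k.1 ≤ ε ^ 2})
    ⟨T.card + 1, Nat.le_add_left 1 _, T, Nat.le_succ _,
      (tsum_notMem_tensorEigenvalue_le_iff hω T).2 hT.le⟩
  exact ⟨S, hS, (tsum_notMem_tensorEigenvalue_le_iff hω S).1 htail⟩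

theorem one_sub_sq_mul_exp_sum_le_avgComplexity (hω : ∀ j, ω j ∈ Ico 0 1) (d : ℕ) (hε : ε ≠ 0) :
    (1 - ε ^ 2) * Real.exp (∑ j : Fin d, ω j) ≤ avgComplexity ω d ε := by
  obtain ⟨S, hcard, hmass⟩ := exists_card_le_avgComplexity hω d hε
  rw [← le_div_iff₀ (Real.exp_pos _), div_eq_mul_inv, ← Real.exp_neg]
  calc 1 - ε ^ 2 ≤ ∑ k ∈ S, tensorEigenvalue ω k := hmass
    _ ≤ S.card * ∏ j : Fin d, (1 - ω j) := by
        rw [← nsmul_eq_mul]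
        exact Finset.sum_le_card_nsmul _ _ _ fun k _ =>
          tensorEigenvalue_le_prod_one_sub (fun j => Ico_subset_Icc_self (hω j)) k
    _ ≤ avgComplexity ω d ε * Real.exp (-∑ j : Fin d, ω j) := by
        gcongr
        · exact Finset.prod_nonneg fun j _ => sub_nonneg.2 (hω j).2.le
        · exact prod_one_sub_le_exp_neg_sum fun j _ => (hω j).2.le

theorem summable_of_avgComplexity_le (hω : ∀ j, ω j ∈ Ico 0 1) (hε : ε ∈ Ioo 0 1) {C : ℕ}
    (hC : ∀ d, avgComplexity ω d ε ≤ C) : Summable ω := by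
  have one_sub_sq_pos : 0 < 1 - ε ^ 2 := sub_pos.2 (pow_lt_one₀ hε.1.le hε.2 two_ne_zero)
  refine summable_of_sum_range_le (c := C / (1 - ε ^ 2)) (fun j => (hω j).1) fun d => ?_
  rw [← Fin.sum_univ_eq_sum_range, le_div_iff₀' one_sub_sq_pos]
  calc (1 - ε ^ 2) * ∑ j : Fin d, ω j ≤ (1 - ε ^ 2) * Real.exp (∑ j : Fin d, ω j) := by
        gcongr
        linarith [Real.add_one_le_exp (∑ j : Fin d, ω j)]
    _ ≤ (avgComplexity ω d ε : ℝ) := one_sub_sq_mul_exp_sum_le_avgComplexity hω d hε.1.ne'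
    _ ≤ (C : ℝ) := mod_cast hC d

theorem avgComplexity_le_prod (hω : ∀ j, ω j ∈ Ico 0 1) {N : Fin d → ℕ} (hN : ∀ j, 0 < N j)
    (hsum : ∑ j : Fin d, ω j ^ N j ≤ ε ^ 2) : avgComplexity ω d ε ≤ ∏ j, N j := by
  have nonempty : (Fintype.piFinset fun j => Finset.range (N j)).Nonempty :=
    Fintype.piFinset_nonempty.2 fun j => Finset.nonempty_range_iff.2 (hN j).ne'
  have mass : 1 - ε ^ 2 ≤
      ∑ k ∈ Fintype.piFinset fun j => Finset.range (N j), tensorEigenvalue ω k :=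
    calc 1 - ε ^ 2 ≤ 1 - ∑ j : Fin d, ω j ^ N j := sub_le_sub_left hsum 1
      _ ≤ ∏ j : Fin d, (1 - ω j ^ N j) := one_sub_sum_le_prod_one_sub fun j _ =>
          ⟨pow_nonneg (hω j).1 _, pow_le_one₀ (hω j).1 (hω j).2.le⟩
      _ = _ := (sum_piFinset_range_tensorEigenvalue ω N).symm
  simpa only [Fintype.card_piFinset, Finset.card_range] using
    avgComplexity_le_card hω nonempty mass

/-- The side lengths `N j` of the box of multi-indices used for the upper bound on the complexity:
`M` in the first `M` coordinates and `1` in all others. They are positive even for `M = 0`. -/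
def boxSide (M j : ℕ) : ℕ :=
  if j < M then M else 1

theorem boxSide_pos (M j : ℕ) : 0 < boxSide M j := by
  unfold boxSide
  split_ifs <;> omega

theorem prod_boxSide_le (M d : ℕ) : ∏ j : Fin d, boxSide M j ≤ M ^ M := by
  rw [Fin.prod_univ_eq_prod_range (boxSide M) d]
  calc ∏ j ∈ Finset.range d, boxSide M j
      ≤ ∏ j ∈ Finset.range (max d M), boxSide M j :=
        Finset.prod_le_prod_of_subset_of_one_le'
          (Finset.range_subset_range.2 (le_max_left d M)) fun j _ _ => boxSide_pos M j
    _ = ∏ j ∈ Finset.range M, boxSide M j :=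
        (Finset.prod_subset (Finset.range_subset_range.2 (le_max_right d M)) fun j _ hj =>
          if_neg (Finset.mem_range.not.1 hj)).symm
    _ = M ^ M :=
        (Finset.prod_eq_pow_card fun j hj => if_pos (Finset.mem_range.1 hj)).trans
          (by rw [Finset.card_range])

theorem pow_boxSide_le {x : ℝ} (hx : x ∈ Icc 0 1) (M j : ℕ) : x ^ boxSide M j ≤ x :=
  pow_le_of_le_one hx.1 hx.2 (boxSide_pos M j).ne'

theorem tendsto_tsum_pow_boxSide (hω : ∀ j, ω j ∈ Ico 0 1) (hsum : Summable ω) :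
    Tendsto (fun M => ∑' j, ω j ^ boxSide M j) atTop (nhds 0) := by
  have pointwise (j : ℕ) : Tendsto (fun M => ω j ^ boxSide M j) atTop (nhds 0) := by
    refine (tendsto_pow_atTop_nhds_zero_of_lt_one (hω j).1 (hω j).2).congr' ?_
    filter_upwards [eventually_gt_atTop j] with M hM
    rw [boxSide, if_pos hM]
  simpa only [tsum_zero] using tendsto_tsum_of_dominated_convergence hsum pointwise
    (Eventually.of_forall fun M j => by
      rw [Real.norm_of_nonneg (pow_nonneg (hω j).1 _)]
      exact pow_boxSide_le (Ico_subset_Icc_self (hω j)) M j)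

theorem exists_avgComplexity_le (hω : ∀ j, ω j ∈ Ico 0 1) (hsum : Summable ω) (hε : ε ≠ 0) :
    ∃ C, ∀ d, avgComplexity ω d ε ≤ C := by
  obtain ⟨M, hM⟩ := ((tendsto_tsum_pow_boxSide hω hsum).eventually
    (gt_mem_nhds (show 0 < ε ^ 2 by positivity))).exists
  refine ⟨M ^ M, fun d => (avgComplexity_le_prod hω (fun j => boxSide_pos M j) ?_).trans
    (prod_boxSide_le M d)⟩
  have nonneg (j : ℕ) : 0 ≤ ω j ^ boxSide M j := pow_nonneg (hω j).1 _
  have summable : Summable fun j => ω j ^ boxSide M j :=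
    hsum.of_nonneg_of_le nonneg fun j => pow_boxSide_le (Ico_subset_Icc_self (hω j)) M j
  rw [Fin.sum_univ_eq_sum_range fun j => ω j ^ boxSide M j]
  exact (summable.sum_le_tsum _ fun j _ => nonneg j).trans hM.le

theorem boundedness_criterion_general (hω : ∀ j, ω j ∈ Ico 0 1) :
    List.TFAE [
      ∀ ε ∈ Ioo (0 : ℝ) 1, ∃ C : ℕ, ∀ d : ℕ, avgComplexity ω d ε ≤ C,
      ∃ ε ∈ Ioo (0 : ℝ) 1, ∃ C : ℕ, ∀ d : ℕ, avgComplexity ω d ε ≤ C,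
      Summable ω,
      Summable fun j => ω j / (1 - ω j) ^ 2] := by
  tfae_have 1 → 2 := fun h => ⟨1 / 2, by norm_num, h (1 / 2) (by norm_num)⟩
  tfae_have 2 → 3 := fun ⟨_, hε, _, hC⟩ => summable_of_avgComplexity_le hω hε hC
  tfae_have 3 → 1 := fun h _ hε => exists_avgComplexity_le hω h hε.1.ne'
  tfae_have 4 ↔ 3 := summable_div_one_sub_sq_iff hω
  tfae_finish

end Complexity

/-- Criterion of boundedness: `sup_d n_d(ε) < ∞` for every `ε ∈ (0,1)` iff `Σ ω_j < ∞`
iff `Σ σ_j⁻² < ∞`. -/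
theorem boundedness_criterion (σ : ℕ → ℝ) (hσ : ∀ j, 0 < σ j) :
    ((∀ ε ∈ Set.Ioo (0 : ℝ) 1, ∃ C : ℕ, ∀ d : ℕ,
        avgComplexity (fun j => omegaFn (σ j)) d ε ≤ C)
      ↔ Summable fun j => omegaFn (σ j))
    ∧ ((Summable fun j => omegaFn (σ j)) ↔ Summable fun j => ((σ j) ^ 2)⁻¹) := by
  have criterion := boundedness_criterion_general fun j =>
    Ioo_subset_Ico_self (omegaFn_mem_Ioo (hσ j).ne')
  simp only [omegaFn_div_one_sub_sq (hσ _).ne'] at criterion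
  exact ⟨criterion.out 0 2, criterion.out 2 3⟩
end

section
/- Let d ≥ 1, let ω_1,…,ω_d ∈ (0,1) and let x > 0. Then Σ_{j=1}^d [ Σ_{k∈ℕ, k≥1, k|ln ω_j| ≤ x} k²|ln ω_j|²(1−ω_j)ω_j^k − ( Σ_{k∈ℕ, k≥1, k|ln ω_j| ≤ x} k|ln ω_j|(1−ω_j)ω_j^k )² ] = Σ_{j≤d : |ln ω_j| ≤ x} |ln ω_j|²ω_j/(1−ω_j)² − Σ_{j≤d : |ln ω_j| ≤ x} (|ln ω_j|² ω_j^{k_j(x)}/(1−ω_j)²) · ( k_j(x)²(1−ω_j)²(1 + ω_j^{k_j(x)}) + 2k_j(x)(1−ω_j)ω_j^{k_j(x)+1} + (1−ω_j)ω_j + ω_j^{k_j(x)+2} ), where k_j(x) = min{k ∈ ℕ : k ≥ 2 and k|ln ω_j| > x}. -/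
/-- `k_j(x) = min{k ∈ ℕ : k ≥ 2, k|ln ω| > x}`. -/
noncomputable def kmin (ω x : ℝ) : ℕ :=
  sInf {k : ℕ | 2 ≤ k ∧ x < (k : ℝ) * |Real.log ω|}

/-!
For a step `ℓ > 0`, in place of `|ln ω|`, the truncation `k ℓ ≤ x` keeps the indices `k < m` with
`m = ⌊x / ℓ⌋ + 1`. The two series are therefore `ℓ ^ 2` and `ℓ` times the second and first moments
of a geometric law truncated at `m`, whose closed forms combine to the identity. If `ℓ ≤ x`, then
`m ≥ 2` and `m` is the index `k_j(x)`; otherwise `m = 1` and both series vanish.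
-/

section GeometricMoments

variable {R : Type*} [CommRing R] (w : R) (n : ℕ)

theorem one_sub_mul_sum_range_mul_geom :
    (1 - w) * ∑ k ∈ Finset.range n, (k : R) * (1 - w) * w ^ k
      = w - w ^ n * (n * (1 - w) + w) := by
  induction n with
  | zero => simp
  | succ n ih =>
    rw [Finset.sum_range_succ, mul_add, ih]
    push_cast
    ring

theorem one_sub_sq_mul_sum_range_sq_mul_geom :
    (1 - w) ^ 2 * ∑ k ∈ Finset.range n, (k : R) ^ 2 * (1 - w) * w ^ k
      = w * (1 + w)
        - w ^ n * ((n : R) ^ 2 * (1 - w) ^ 2 + 2 * n * (1 - w) * w + w * (1 + w)) := by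
  induction n with
  | zero => simp
  | succ n ih =>
    rw [Finset.sum_range_succ, mul_add, ih]
    push_cast
    ring

theorem one_sub_sq_mul_geom_variance_range :
    (1 - w) ^ 2 * (∑ k ∈ Finset.range n, (k : R) ^ 2 * (1 - w) * w ^ k
        - (∑ k ∈ Finset.range n, (k : R) * (1 - w) * w ^ k) ^ 2)
      = w - w ^ n * ((n : R) ^ 2 * (1 - w) ^ 2 * (1 + w ^ n)
          + 2 * n * (1 - w) * w ^ (n + 1) + (1 - w) * w + w ^ (n + 2)) := by
  rw [mul_sub, ← mul_pow, one_sub_mul_sum_range_mul_geom, one_sub_sq_mul_sum_range_sq_mul_geom]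
  ring

end GeometricMoments

section Truncation

variable {K : Type*} [Field K] [LinearOrder K]

/-- The index `k_j(x)` for an arbitrary step `ℓ` in place of `|ln ω_j|`: the least `k ≥ 2` whose
multiple `k ℓ` exceeds `x`. It is `0` if there is no such `k`. -/
noncomputable def truncationIndex (ℓ x : K) : ℕ :=
  sInf {k : ℕ | 2 ≤ k ∧ x < (k : K) * ℓ}

/-- The truncated variance `𝔼[X²; 0 < X ≤ x] - 𝔼[X; 0 < X ≤ x]²`, where `X` takes the value `k ℓ`
with weight `(1 - w) w ^ k`. For `ℓ > 0` both series have finite support, so that their sums are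
never the default value of a divergent `tsum`. -/
noncomputable def truncatedVariance [TopologicalSpace K] (ℓ w x : K) : K :=
  (∑' k : ℕ, if 1 ≤ k ∧ (k : K) * ℓ ≤ x then (k : K) ^ 2 * ℓ ^ 2 * (1 - w) * w ^ k else 0)
    - (∑' k : ℕ, if 1 ≤ k ∧ (k : K) * ℓ ≤ x then (k : K) * ℓ * (1 - w) * w ^ k else 0) ^ 2

variable [IsStrictOrderedRing K] [FloorSemiring K] {ℓ x : K}

theorem natCast_mul_le_iff_lt_floor_add_one (hℓ : 0 < ℓ) {k : ℕ} (hk : k ≠ 0) :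
    (k : K) * ℓ ≤ x ↔ k < ⌊x / ℓ⌋₊ + 1 := by
  rw [Nat.lt_succ_iff, Nat.le_floor_iff' hk, le_div_iff₀ hℓ]

theorem truncationIndex_eq_max (hℓ : 0 < ℓ) :
    truncationIndex ℓ x = max 2 (⌊x / ℓ⌋₊ + 1) := by
  have hset : {k : ℕ | 2 ≤ k ∧ x < (k : K) * ℓ} = Set.Ici (max 2 (⌊x / ℓ⌋₊ + 1)) := by
    ext k
    simp only [Set.mem_ofPred_eq, Set.mem_Ici, max_le_iff]
    refine and_congr_right fun hk => ?_
    rw [← not_le, natCast_mul_le_iff_lt_floor_add_one hℓ (by lia), not_lt]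
  rw [truncationIndex, hset, csInf_Ici]

theorem truncationIndex_of_le (hℓ : 0 < ℓ) (hx : ℓ ≤ x) :
    truncationIndex ℓ x = ⌊x / ℓ⌋₊ + 1 := by
  have hfloor : 1 ≤ ⌊x / ℓ⌋₊ := Nat.one_le_floor_iff _ |>.2 ((one_le_div hℓ).2 hx)
  rw [truncationIndex_eq_max hℓ, max_eq_right (Nat.succ_le_succ hfloor)]

theorem tsum_ite_natCast_mul_le {M : Type*} [AddCommMonoid M] [TopologicalSpace M]
    (hℓ : 0 < ℓ) {f : ℕ → M} (hf : f 0 = 0) :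
    (∑' k : ℕ, if 1 ≤ k ∧ (k : K) * ℓ ≤ x then f k else 0)
      = ∑ k ∈ Finset.range (⌊x / ℓ⌋₊ + 1), f k := by
  have hterm (k : ℕ) : (if 1 ≤ k ∧ (k : K) * ℓ ≤ x then f k else 0)
      = if k ∈ Finset.range (⌊x / ℓ⌋₊ + 1) then f k else 0 := by
    rcases eq_or_ne k 0 with rfl | hk
    · simp [hf]
    · simp only [natCast_mul_le_iff_lt_floor_add_one hℓ hk, Nat.one_le_iff_ne_zero.2 hk,
        true_and, Finset.mem_range]
  rw [tsum_congr hterm, tsum_eq_sum fun k hk => if_neg hk, Finset.sum_ite_mem, Finset.inter_self]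

variable [TopologicalSpace K]

theorem truncatedVariance_eq_sum_range (hℓ : 0 < ℓ) (w : K) :
    truncatedVariance ℓ w x
      = ℓ ^ 2 * (∑ k ∈ Finset.range (⌊x / ℓ⌋₊ + 1), (k : K) ^ 2 * (1 - w) * w ^ k
          - (∑ k ∈ Finset.range (⌊x / ℓ⌋₊ + 1), (k : K) * (1 - w) * w ^ k) ^ 2) := by
  rw [truncatedVariance, tsum_ite_natCast_mul_le hℓ (by simp),
    tsum_ite_natCast_mul_le hℓ (by simp), mul_sub, ← mul_pow, Finset.mul_sum, Finset.mul_sum]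
  congr 1
  · exact Finset.sum_congr rfl fun k _ => by ring
  · exact congrArg (· ^ 2) (Finset.sum_congr rfl fun k _ => by ring)

theorem truncatedVariance_of_lt (hℓ : 0 < ℓ) (hx : x < ℓ) (w : K) :
    truncatedVariance ℓ w x = 0 := by
  have hfloor : ⌊x / ℓ⌋₊ = 0 := Nat.floor_eq_zero.2 ((div_lt_one hℓ).2 hx)
  simp [truncatedVariance_eq_sum_range hℓ, hfloor]

theorem truncatedVariance_of_le (hℓ : 0 < ℓ) (hx : ℓ ≤ x) {w : K} (hw : w ≠ 1) :
    truncatedVariance ℓ w x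
      = ℓ ^ 2 * w / (1 - w) ^ 2
        - ℓ ^ 2 * w ^ truncationIndex ℓ x / (1 - w) ^ 2
          * ((truncationIndex ℓ x : K) ^ 2 * (1 - w) ^ 2 * (1 + w ^ truncationIndex ℓ x)
            + 2 * (truncationIndex ℓ x : K) * (1 - w) * w ^ (truncationIndex ℓ x + 1)
            + (1 - w) * w + w ^ (truncationIndex ℓ x + 2)) := by
  have hw' : (1 - w) ^ 2 ≠ 0 := pow_ne_zero 2 (sub_ne_zero.2 hw.symm)
  rw [truncatedVariance_eq_sum_range hℓ, ← truncationIndex_of_le hℓ hx,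
    eq_div_of_mul_eq hw' ((mul_comm _ _).trans (one_sub_sq_mul_geom_variance_range w _))]
  ring

theorem sum_truncated_variance_identity_general {ι : Type*} (s : Finset ι) {ℓ w : ι → K}
    (hℓ : ∀ j ∈ s, 0 < ℓ j) (hw : ∀ j ∈ s, w j ≠ 1) (x : K) :
    ∑ j ∈ s, truncatedVariance (ℓ j) (w j) x
      = (∑ j ∈ s with ℓ j ≤ x, ℓ j ^ 2 * w j / (1 - w j) ^ 2)
        - ∑ j ∈ s with ℓ j ≤ x,
            ℓ j ^ 2 * w j ^ truncationIndex (ℓ j) x / (1 - w j) ^ 2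
              * ((truncationIndex (ℓ j) x : K) ^ 2 * (1 - w j) ^ 2
                  * (1 + w j ^ truncationIndex (ℓ j) x)
                + 2 * (truncationIndex (ℓ j) x : K) * (1 - w j)
                  * w j ^ (truncationIndex (ℓ j) x + 1)
                + (1 - w j) * w j + w j ^ (truncationIndex (ℓ j) x + 2)) := by
  rw [← Finset.sum_sub_distrib, Finset.sum_filter]
  refine Finset.sum_congr rfl fun j hj => ?_
  split_ifs with hx
  · exact truncatedVariance_of_le (hℓ j hj) hx (hw j hj)
  · exact truncatedVariance_of_lt (hℓ j hj) (not_le.1 hx) (w j)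

end Truncation

/-- Third identity of the key lemma (truncated variances). -/
theorem sum_truncated_variance_identity (d : ℕ) (hd : 1 ≤ d) (ω : Fin d → ℝ)
    (hω : ∀ j, ω j ∈ Set.Ioo (0 : ℝ) 1) (x : ℝ) (hx : 0 < x) :
    ∑ j : Fin d,
        ((∑' k : ℕ, if 1 ≤ k ∧ (k : ℝ) * |Real.log (ω j)| ≤ x then
            (k : ℝ) ^ 2 * |Real.log (ω j)| ^ 2 * (1 - ω j) * ω j ^ k else 0)
          - (∑' k : ℕ, if 1 ≤ k ∧ (k : ℝ) * |Real.log (ω j)| ≤ x then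
              (k : ℝ) * |Real.log (ω j)| * (1 - ω j) * ω j ^ k else 0) ^ 2)
      = (∑ j ∈ Finset.univ.filter (fun j : Fin d => |Real.log (ω j)| ≤ x),
            |Real.log (ω j)| ^ 2 * ω j / (1 - ω j) ^ 2)
        - ∑ j ∈ Finset.univ.filter (fun j : Fin d => |Real.log (ω j)| ≤ x),
            |Real.log (ω j)| ^ 2 * ω j ^ kmin (ω j) x / (1 - ω j) ^ 2
              * ((kmin (ω j) x : ℝ) ^ 2 * (1 - ω j) ^ 2 * (1 + ω j ^ kmin (ω j) x)
                + 2 * (kmin (ω j) x : ℝ) * (1 - ω j) * ω j ^ (kmin (ω j) x + 1)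
                + (1 - ω j) * ω j + ω j ^ (kmin (ω j) x + 2)) :=
  sum_truncated_variance_identity_general Finset.univ
    (fun j _ => abs_pos.2 (Real.log_neg (hω j).1 (hω j).2).ne) (fun j _ => (hω j).2.ne) x
end

section
/- Let d ≥ 1, let ω_1,…,ω_d ∈ (0,1) and let X > 0. Then Σ_{j≤d : |ln ω_j| ≤ X} (|ln ω_j| ω_j^{k_j(X)}/(1−ω_j)) · (k_j(X)(1−ω_j) + ω_j) ≤ (2X + 1) · Σ_{j≤d : |ln ω_j| ≤ X} ω_j^{k_j(X)}, where k_j(X) = min{k ∈ ℕ : k ≥ 2 and k|ln ω_j| > X}. -/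
/-!
With `k = kmin ω X`, a summand expands to `(k * |log ω| + |log ω| * ω / (1 - ω)) * ω ^ k`. The
second term of the factor is negative for `ω > 1`, and for `ω < 1` it is at most `1` because
`1 - ω⁻¹ ≤ log ω`. For the first, either `k = 2`, or `k - 1 ≥ 2` violates the inequality defining
`k`; as `|log ω| ≤ X`, both cases give `k * |log ω| ≤ X + |log ω| ≤ 2 * X`.
-/

theorem abs_log_mul_self_div_one_sub_le_one {ω : ℝ} (hω : 0 < ω) :
    |Real.log ω| * ω / (1 - ω) ≤ 1 := by
  rcases lt_or_ge ω 1 with hlt | hge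
  · have hneg_log : -Real.log ω ≤ ω⁻¹ - 1 := by
      linarith [Real.one_sub_inv_le_log_of_pos hω]
    rw [abs_of_neg (Real.log_neg hω hlt), div_le_one (sub_pos.mpr hlt)]
    calc -Real.log ω * ω ≤ (ω⁻¹ - 1) * ω := by gcongr
      _ = 1 - ω := by rw [sub_mul, inv_mul_cancel₀ hω.ne', one_mul]
  · exact (div_nonpos_of_nonneg_of_nonpos (by positivity) (sub_nonpos.mpr hge)).trans zero_le_one

theorem kmin_mul_abs_log_le_add {ω x : ℝ} (hx : |Real.log ω| ≤ x) :
    (kmin ω x : ℝ) * |Real.log ω| ≤ x + |Real.log ω| := by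
  -- If `log ω = 0`, no `k` qualifies and `kmin ω x = sInf ∅ = 0`, so `≤ 2` is not just `= 2`.
  rcases le_or_gt (kmin ω x) 2 with hle | hgt
  · calc (kmin ω x : ℝ) * |Real.log ω| ≤ 2 * |Real.log ω| := by gcongr; exact_mod_cast hle
      _ ≤ x + |Real.log ω| := by linarith
  · obtain ⟨m, hm⟩ := Nat.exists_eq_succ_of_ne_zero (by omega : kmin ω x ≠ 0)
    have hpred : (m : ℝ) * |Real.log ω| ≤ x := by
      by_contra! hlt
      have : kmin ω x ≤ m := Nat.sInf_le ⟨by omega, hlt⟩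
      omega
    rw [hm, Nat.cast_succ, add_one_mul]
    gcongr

theorem remainder_term_le {ω X : ℝ} (hpos : 0 < ω) (hne : ω ≠ 1) (hX : |Real.log ω| ≤ X) :
    |Real.log ω| * ω ^ kmin ω X / (1 - ω) * ((kmin ω X : ℝ) * (1 - ω) + ω)
      ≤ (2 * X + 1) * ω ^ kmin ω X := by
  have hsub : 1 - ω ≠ 0 := sub_ne_zero.mpr hne.symm
  calc |Real.log ω| * ω ^ kmin ω X / (1 - ω) * ((kmin ω X : ℝ) * (1 - ω) + ω)
      = ((kmin ω X : ℝ) * |Real.log ω| + |Real.log ω| * ω / (1 - ω)) * ω ^ kmin ω X := by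
        field_simp
    _ ≤ (2 * X + 1) * ω ^ kmin ω X := by
        have hk : (kmin ω X : ℝ) * |Real.log ω| ≤ 2 * X := by
          linarith [kmin_mul_abs_log_le_add hX]
        have hfrac : |Real.log ω| * ω / (1 - ω) ≤ 1 := abs_log_mul_self_div_one_sub_le_one hpos
        gcongr

theorem remainder_R1_bound_general {ι : Type*} (s : Finset ι) (ω : ι → ℝ)
    (hω : ∀ j ∈ s, 0 < ω j ∧ ω j ≠ 1) (X : ℝ) :
    ∑ j ∈ s.filter (fun j => |Real.log (ω j)| ≤ X),
        |Real.log (ω j)| * ω j ^ kmin (ω j) X / (1 - ω j)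
          * ((kmin (ω j) X : ℝ) * (1 - ω j) + ω j)
      ≤ (2 * X + 1) *
          ∑ j ∈ s.filter (fun j => |Real.log (ω j)| ≤ X), ω j ^ kmin (ω j) X := by
  rw [Finset.mul_sum]
  refine Finset.sum_le_sum fun j hj => ?_
  obtain ⟨hjs, hjX⟩ := Finset.mem_filter.mp hj
  exact remainder_term_le (hω j hjs).1 (hω j hjs).2 hjX

/-- The remainder `R₁` is bounded: for `ω_j ∈ (0,1)` and `X > 0`,
`Σ_{j : |ln ω_j|≤X} (|ln ω_j|ω_j^{k_j(X)}/(1-ω_j))(k_j(X)(1-ω_j)+ω_j)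
  ≤ (2X+1) Σ_{j : |ln ω_j|≤X} ω_j^{k_j(X)}`. -/
theorem remainder_R1_bound (d : ℕ) (hd : 1 ≤ d) (ω : Fin d → ℝ)
    (hω : ∀ j, ω j ∈ Set.Ioo (0 : ℝ) 1) (X : ℝ) (hX : 0 < X) :
    ∑ j ∈ Finset.univ.filter (fun j : Fin d => |Real.log (ω j)| ≤ X),
        |Real.log (ω j)| * ω j ^ kmin (ω j) X / (1 - ω j)
          * ((kmin (ω j) X : ℝ) * (1 - ω j) + ω j)
      ≤ (2 * X + 1) *
          ∑ j ∈ Finset.univ.filter (fun j : Fin d => |Real.log (ω j)| ≤ X),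
            ω j ^ kmin (ω j) X :=
  remainder_R1_bound_general Finset.univ ω (fun j _ => ⟨(hω j).1, (hω j).2.ne⟩) X
end

section
/- Let d ≥ 1, let ω_1,…,ω_d ∈ (0,1) and let X > 0. Then Σ_{j≤d : |ln ω_j| ≤ X} (|ln ω_j|² ω_j^{k_j(X)}/(1−ω_j)²) · ( k_j(X)²(1−ω_j)²(1 + ω_j^{k_j(X)}) + 2k_j(X)(1−ω_j)ω_j^{k_j(X)+1} + (1−ω_j)ω_j + ω_j^{k_j(X)+2} ) ≤ (8X² + 4X + 2) · Σ_{j≤d : |ln ω_j| ≤ X} ω_j^{k_j(X)}, where k_j(X) = min{k ∈ ℕ : k ≥ 2 and k|ln ω_j| > X}. -/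
/-- The contribution of one parameter `ω` to the remainder `R₂`, with an arbitrary `k` in place of
the threshold `k_j(X)`. -/
noncomputable def remainderTerm (ω : ℝ) (k : ℕ) : ℝ :=
  |Real.log ω| ^ 2 * ω ^ k / (1 - ω) ^ 2
    * ((k : ℝ) ^ 2 * (1 - ω) ^ 2 * (1 + ω ^ k)
      + 2 * (k : ℝ) * (1 - ω) * ω ^ (k + 1)
      + (1 - ω) * ω + ω ^ (k + 2))

lemma abs_le_abs_sinh (x : ℝ) : |x| ≤ |Real.sinh x| := by
  rw [Real.abs_sinh]
  exact Real.self_le_sinh_iff.2 (abs_nonneg x)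

lemma sq_log_mul_self_le_sq_one_sub {ω : ℝ} (hω : 0 < ω) :
    Real.log ω ^ 2 * ω ≤ (1 - ω) ^ 2 := by
  obtain ⟨s, hs, rfl⟩ : ∃ s, 0 < s ∧ ω = s ^ 2 :=
    ⟨√ω, Real.sqrt_pos.2 hω, (Real.sq_sqrt hω.le).symm⟩
  have hlog : Real.log (s ^ 2) = 2 * Real.log s := by simp
  have hsinh : Real.log s ^ 2 ≤ Real.sinh (Real.log s) ^ 2 :=
    sq_le_sq.2 (abs_le_abs_sinh _)
  calc Real.log (s ^ 2) ^ 2 * s ^ 2 = (2 * s) ^ 2 * Real.log s ^ 2 := by rw [hlog]; ring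
    _ ≤ (2 * s) ^ 2 * Real.sinh (Real.log s) ^ 2 := by gcongr
    _ = (1 - s ^ 2) ^ 2 := by rw [Real.sinh_log hs]; field_simp; ring

lemma abs_log_mul_self_le_one_sub {ω : ℝ} (hω₀ : 0 ≤ ω) (hω₁ : ω ≤ 1) :
    |Real.log ω| * ω ≤ 1 - ω := by
  rw [abs_of_nonpos (Real.log_nonpos hω₀ hω₁), neg_mul_comm, mul_comm]
  exact Real.negMulLog_le_one_sub_self hω₀

lemma kmin_mul_abs_log_le {ω x : ℝ} (h : |Real.log ω| ≤ x) :
    kmin ω x * |Real.log ω| ≤ 2 * x := by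
  obtain hk | hk := le_or_gt (kmin ω x) 2
  · have hk' : (kmin ω x : ℝ) ≤ 2 := by exact_mod_cast hk
    gcongr
  · obtain ⟨m, hm⟩ : ∃ m, kmin ω x = m + 1 := Nat.exists_eq_succ_of_ne_zero (by lia)
    have hmem : m ∉ {k : ℕ | 2 ≤ k ∧ x < (k : ℝ) * |Real.log ω|} :=
      Nat.notMem_of_lt_sInf (show m < kmin ω x by lia)
    have hpred : m * |Real.log ω| ≤ x := not_lt.1 fun hlt ↦ hmem ⟨by lia, hlt⟩
    calc (kmin ω x : ℝ) * |Real.log ω| = m * |Real.log ω| + |Real.log ω| := by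
          rw [hm]; push_cast; ring
      _ ≤ 2 * x := by linarith

lemma remainderTerm_eq {ω : ℝ} (hω : ω ≠ 1) (k : ℕ) :
    remainderTerm ω k =
      ((k * |Real.log ω|) ^ 2 * (1 + ω ^ k)
        + 2 * (k * |Real.log ω|) * (ω ^ k * (|Real.log ω| * ω / (1 - ω)))
        + Real.log ω ^ 2 * ω / (1 - ω) ^ 2 * (1 - ω + ω ^ (k + 1))) * ω ^ k := by
  have hω' : 1 - ω ≠ 0 := sub_ne_zero.2 hω.symm
  rw [remainderTerm, ← sq_abs (Real.log ω)]
  field_simp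
  ring

lemma remainderTerm_le {ω : ℝ} (hω : ω ∈ Set.Ioo 0 1) (k : ℕ) :
    remainderTerm ω k ≤
      (2 * (k * |Real.log ω|) ^ 2 + 2 * (k * |Real.log ω|) + 1) * ω ^ k := by
  obtain ⟨hω₀, hω₁⟩ := hω
  have hsub : 0 < 1 - ω := sub_pos.2 hω₁
  have hpow : ω ^ k ≤ 1 := pow_le_one₀ hω₀.le hω₁.le
  have hlinear : ω ^ k * (|Real.log ω| * ω / (1 - ω)) ≤ 1 :=
    mul_le_one₀ hpow (by positivity)
      ((div_le_one hsub).2 (abs_log_mul_self_le_one_sub hω₀.le hω₁.le))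
  have hquadratic : Real.log ω ^ 2 * ω / (1 - ω) ^ 2 ≤ 1 :=
    (div_le_one (by positivity)).2 (sq_log_mul_self_le_sq_one_sub hω₀)
  have hfactor : 1 - ω + ω ^ (k + 1) ≤ 1 := by
    linarith [pow_le_of_le_one hω₀.le hω₁.le k.add_one_ne_zero]
  rw [remainderTerm_eq hω₁.ne]
  gcongr ?_ * _
  calc _ ≤ (k * |Real.log ω|) ^ 2 * (1 + 1) + 2 * (k * |Real.log ω|) * 1 + 1 := by
        gcongr
        exact mul_le_one₀ hquadratic (by positivity) hfactor
    _ = _ := by ring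

theorem remainder_R2_bound_general {ι : Type*} (s : Finset ι) (ω : ι → ℝ) (X : ℝ)
    (hω : ∀ j ∈ s, ω j ∈ Set.Ioo (0 : ℝ) 1) (hlog : ∀ j ∈ s, |Real.log (ω j)| ≤ X) :
    ∑ j ∈ s, remainderTerm (ω j) (kmin (ω j) X)
      ≤ (8 * X ^ 2 + 4 * X + 1) * ∑ j ∈ s, ω j ^ kmin (ω j) X := by
  rw [Finset.mul_sum]
  refine Finset.sum_le_sum fun j hj ↦ (remainderTerm_le (hω j hj) _).trans ?_
  have hpos : 0 < ω j := (hω j hj).1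
  have hkmin := kmin_mul_abs_log_le (hlog j hj)
  calc _ ≤ (2 * (2 * X) ^ 2 + 2 * (2 * X) + 1) * ω j ^ kmin (ω j) X := by gcongr
    _ = _ := by ring

/-- The remainder `R₂` is bounded: for `ω_j ∈ (0,1)` and `X > 0`,
the `R₂`-sum is at most `(8X² + 4X + 2) Σ_{j : |ln ω_j|≤X} ω_j^{k_j(X)}`. -/
theorem remainder_R2_bound (d : ℕ) (hd : 1 ≤ d) (ω : Fin d → ℝ)
    (hω : ∀ j, ω j ∈ Set.Ioo (0 : ℝ) 1) (X : ℝ) (hX : 0 < X) :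
    ∑ j ∈ Finset.univ.filter (fun j : Fin d => |Real.log (ω j)| ≤ X),
        |Real.log (ω j)| ^ 2 * ω j ^ kmin (ω j) X / (1 - ω j) ^ 2
          * ((kmin (ω j) X : ℝ) ^ 2 * (1 - ω j) ^ 2 * (1 + ω j ^ kmin (ω j) X)
            + 2 * (kmin (ω j) X : ℝ) * (1 - ω j) * ω j ^ (kmin (ω j) X + 1)
            + (1 - ω j) * ω j + ω j ^ (kmin (ω j) X + 2))
      ≤ (8 * X ^ 2 + 4 * X + 2) *
          ∑ j ∈ Finset.univ.filter (fun j : Fin d => |Real.log (ω j)| ≤ X),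
            ω j ^ kmin (ω j) X := by
  refine (remainder_R2_bound_general _ ω X (fun j _ ↦ hω j) (by simp)).trans ?_
  gcongr
  · exact Finset.sum_nonneg fun j _ ↦ pow_nonneg (hω j).1.le _
  · exact one_le_two
end

section
/- Let (σ_j)_{j≥1} be a sequence of positive real numbers with σ_j → σ as j → ∞ for some constant σ with 0 ≤ σ < ∞, let ω_j = ω(σ_j), and let n_d(ε) be the average case approximation complexity built from (ω_j). Define a_d = Σ_{j=1}^d ( |ln ω_j| ω_j/(1−ω_j) + |ln(1−ω_j)| ) and b_d = ρ√d, where ρ = |ln ω|√ω/(1−ω) with ω = ω(σ) if σ > 0, and ρ = 1 if σ = 0. Then for every ε ∈ (0,1), (ln n_d(ε) − a_d)/b_d → Φ⁻¹(1 − ε²) as d → ∞, where Φ is the cumulative distribution function of the standard Gaussian law and Φ⁻¹(p) = inf{x ∈ ℝ : Φ(x) ≥ p}. -/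
open Filter Set

/-- The cumulative distribution function `Φ` of the standard Gaussian law. -/
noncomputable def stdGaussianCDF (x : ℝ) : ℝ :=
  ProbabilityTheory.cdf (ProbabilityTheory.gaussianReal 0 1) x

/-- The quantile `Φ⁻¹(p) = inf{x : Φ(x) ≥ p}` of the standard Gaussian law. -/
noncomputable def stdGaussianQuantile (p : ℝ) : ℝ :=
  sInf {x : ℝ | p ≤ stdGaussianCDF x}

/-- `a_d = Σ_{j=1}^d ( |ln ω_j| ω_j/(1-ω_j) + |ln(1-ω_j)| )`. -/
noncomputable def aSeq (ω : ℕ → ℝ) (d : ℕ) : ℝ :=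
  ∑ j ∈ Finset.range d, (|Real.log (ω j)| * ω j / (1 - ω j) + |Real.log (1 - ω j)|)

/-!
If `K` is a random multi-index with `P(K = k) = λ_d(k)`, then `n_d(ε)` is the least number of points
carrying mass `1 - ε²` of the law of `K`. The heaviest points are those of least information
`-log λ_d(K)`. At most `exp t` points have information at most `t`, and any `n` further points
carry mass at most `n exp (-t)`; hence `log n_d(ε)` is the `(1 - ε²)`-quantile of the information,
up to a bounded error. The coordinates of `K` are independent and geometric, so the information is a
sum of independent terms, with total mean `a_d`, with variances `(log ω_j / (1 - ω_j))² ω_j`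
converging to `ρ²`, and with bounded third central moments. Lyapunov's central limit theorem gives
the Gaussian quantile. The slope `dslope log 1` of the logarithm between `1` and `ω` equals
`|log ω| / (1 - ω)` for `ω < 1` and extends it continuously by `1` to `ω = 1`, which treats `σ > 0`
and `σ = 0` at once.
-/

open MeasureTheory ProbabilityTheory
open scoped NNReal Nat Topology

lemma norm_prod_sub_prod_le_sum {ι R : Type*} [NormedCommRing R] [NormOneClass R]
    (s : Finset ι) {a b : ι → R} (ha : ∀ i ∈ s, ‖a i‖ ≤ 1) (hb : ∀ i ∈ s, ‖b i‖ ≤ 1) :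
    ‖∏ i ∈ s, a i - ∏ i ∈ s, b i‖ ≤ ∑ i ∈ s, ‖a i - b i‖ := by
  induction s using Finset.cons_induction with
  | empty => simp
  | cons i s hi ih =>
    rw [Finset.forall_mem_cons] at ha hb
    have hprod : ‖∏ j ∈ s, a j‖ ≤ 1 :=
      (s.norm_prod_le a).trans (Finset.prod_le_one (fun _ _ ↦ norm_nonneg _) ha.2)
    rw [Finset.prod_cons, Finset.prod_cons, Finset.sum_cons]
    calc ‖a i * ∏ j ∈ s, a j - b i * ∏ j ∈ s, b j‖
        = ‖(a i - b i) * ∏ j ∈ s, a j + b i * (∏ j ∈ s, a j - ∏ j ∈ s, b j)‖ := by ring_nf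
      _ ≤ ‖a i - b i‖ * ‖∏ j ∈ s, a j‖ + ‖b i‖ * ‖∏ j ∈ s, a j - ∏ j ∈ s, b j‖ :=
        norm_add_le_of_le (norm_mul_le _ _) (norm_mul_le _ _)
      _ ≤ ‖a i - b i‖ * 1 + 1 * ∑ j ∈ s, ‖a j - b j‖ := by
        gcongr
        exacts [hb.1, ih ha.2 hb.2]
      _ = ‖a i - b i‖ + ∑ j ∈ s, ‖a j - b j‖ := by ring

lemma norm_cexp_mul_I_sub_taylor_two_le (x : ℝ) :
    ‖Complex.exp (x * Complex.I) - (1 + x * Complex.I - (x : ℂ) ^ 2 / 2)‖ ≤ 4 * |x| ^ 3 := by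
  rcases le_total |x| 1 with hx | hx
  · have htaylor := Complex.exp_bound (x := x * Complex.I) (n := 3) (by simpa using hx) (by simp)
    have hsum : ∑ m ∈ Finset.range 3, (x * Complex.I) ^ m / (m.factorial : ℂ)
        = 1 + x * Complex.I - (x : ℂ) ^ 2 / 2 := by
      simp [Finset.sum_range_succ, mul_pow, neg_div, ← sub_eq_add_neg]
    rw [hsum] at htaylor
    refine htaylor.trans ?_
    rw [mul_comm, norm_mul, Complex.norm_real, Complex.norm_I, mul_one, Real.norm_eq_abs]
    gcongr
    norm_num [Nat.factorial]
  · have hpoly : ‖1 + x * Complex.I - (x : ℂ) ^ 2 / 2‖ ≤ 1 + |x| + |x| ^ 2 / 2 :=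
      (norm_sub_le _ _).trans (add_le_add ((norm_add_le _ _).trans (by simp)) (by simp))
    calc ‖Complex.exp (x * Complex.I) - (1 + x * Complex.I - (x : ℂ) ^ 2 / 2)‖
        ≤ 1 + (1 + |x| + |x| ^ 2 / 2) :=
          norm_sub_le_of_le (Complex.norm_exp_ofReal_mul_I x).le hpoly
      _ ≤ 4 * |x| ^ 3 := by
        have h3 : 1 ≤ |x| ^ 3 := one_le_pow₀ hx
        have h13 : |x| ≤ |x| ^ 3 := le_self_pow₀ hx (by simp)
        have h23 : |x| ^ 2 ≤ |x| ^ 3 := pow_le_pow_right₀ hx (by simp)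
        linarith

lemma abs_exp_neg_half_sq_sub_taylor_le (x : ℝ) :
    |Real.exp (-(x ^ 2 / 2)) - (1 - x ^ 2 / 2)| ≤ |x| ^ 3 := by
  rcases le_total |x| 1 with hx | hx
  · have hx2 : |x| ^ 2 ≤ 1 := pow_le_one₀ (abs_nonneg x) hx
    have habs : |-(x ^ 2 / 2)| = |x| ^ 2 / 2 := by
      rw [abs_neg, abs_of_nonneg (by positivity), sq_abs]
    calc |Real.exp (-(x ^ 2 / 2)) - (1 - x ^ 2 / 2)|
        = |Real.exp (-(x ^ 2 / 2)) - 1 - -(x ^ 2 / 2)| := by ring_nf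
      _ ≤ (-(x ^ 2 / 2)) ^ 2 := Real.abs_exp_sub_one_sub_id_le (by linarith)
      _ = |x| ^ 3 * (|x| / 4) := by rw [← sq_abs, habs]; ring
      _ ≤ |x| ^ 3 := mul_le_of_le_one_right (by positivity) (by linarith)
  · have hlower := Real.add_one_le_exp (-(x ^ 2 / 2))
    have hupper : Real.exp (-(x ^ 2 / 2)) ≤ 1 := Real.exp_le_one_iff.2 (by linarith [sq_nonneg x])
    have h23 : |x| ^ 2 ≤ |x| ^ 3 := pow_le_pow_right₀ hx (by simp)
    rw [sq_abs] at h23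
    rw [abs_of_nonneg (by linarith)]
    linarith [sq_nonneg x]

section CentralLimitTheorem

variable {Ω : Type*} [MeasurableSpace Ω] {P : Measure Ω} [IsProbabilityMeasure P]

lemma sqrt_variance_pow_three_le {X : Ω → ℝ} (hX : MemLp X 3 P) (h0 : P[X] = 0) :
    √Var[X; P] ^ 3 ≤ P[fun ω ↦ |X ω| ^ 3] := by
  have hX2 : Integrable (fun ω ↦ X ω ^ 2) P := (hX.mono_exponent (by norm_num)).integrable_sq
  have hX3 : Integrable (fun ω ↦ |X ω| ^ 3) P := hX.integrable_norm_pow (by simp)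
  have hvar : P[fun ω ↦ X ω ^ 2] = √Var[X; P] ^ 2 := by
    rw [Real.sq_sqrt (variance_nonneg _ _), variance_of_integral_eq_zero hX.aemeasurable h0]
  -- `3 s a² ≤ 2 a³ + s³`, integrated with `s` the standard deviation.
  have hamgm : ∀ s a : ℝ, 0 ≤ s → 0 ≤ a → 3 * s * a ^ 2 - s ^ 3 ≤ 2 * a ^ 3 := fun s a hs ha ↦ by
    nlinarith [mul_nonneg (sq_nonneg (a - s)) (by positivity : 0 ≤ 2 * a + s)]
  have hint : P[fun ω ↦ 3 * √Var[X; P] * X ω ^ 2 - √Var[X; P] ^ 3] ≤ P[fun ω ↦ 2 * |X ω| ^ 3] :=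
    integral_mono ((hX2.const_mul _).sub (integrable_const _)) (hX3.const_mul 2) fun ω ↦ by
      simpa only [sq_abs] using hamgm _ |X ω| (Real.sqrt_nonneg _) (abs_nonneg _)
  rw [integral_sub (hX2.const_mul _) (integrable_const _), integral_const_mul, integral_const_mul,
    hvar, integral_const, probReal_univ, one_smul] at hint
  linarith

lemma norm_charFun_map_sub_taylor_two_le {X : Ω → ℝ} (hX : MemLp X 3 P) (h0 : P[X] = 0) (t : ℝ) :
    ‖charFun (P.map X) t - ((1 - Var[X; P] * t ^ 2 / 2 : ℝ) : ℂ)‖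
      ≤ 4 * |t| ^ 3 * P[fun ω ↦ |X ω| ^ 3] := by
  have hX1 : Integrable X P := hX.integrable (by norm_num)
  have hX2 : Integrable (fun ω ↦ X ω ^ 2) P := (hX.mono_exponent (by norm_num)).integrable_sq
  have hX3 : Integrable (fun ω ↦ |X ω| ^ 3) P := hX.integrable_norm_pow (by simp)
  have hexp : Integrable (fun ω ↦ Complex.exp ((t * X ω : ℝ) * Complex.I)) P :=
    Integrable.of_bound (by fun_prop (disch := exact hX.1)) 1
      (ae_of_all _ fun ω ↦ (Complex.norm_exp_ofReal_mul_I _).le)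
  have hre : Integrable (fun ω ↦ ((1 - t ^ 2 / 2 * X ω ^ 2 : ℝ) : ℂ)) P :=
    ((integrable_const _).sub (hX2.const_mul _)).ofReal
  have him : Integrable (fun ω ↦ ((t * X ω : ℝ) : ℂ) * Complex.I) P :=
    (hX1.const_mul t).ofReal.mul_const _
  have htaylor : ∀ ω, (1 + (t * X ω : ℝ) * Complex.I - ((t * X ω : ℝ) : ℂ) ^ 2 / 2)
      = ((1 - t ^ 2 / 2 * X ω ^ 2 : ℝ) : ℂ) + ((t * X ω : ℝ) : ℂ) * Complex.I := fun ω ↦ by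
    push_cast; ring
  have htaylor_int : Integrable
      (fun ω ↦ ((1 - t ^ 2 / 2 * X ω ^ 2 : ℝ) : ℂ) + ((t * X ω : ℝ) : ℂ) * Complex.I) P :=
    hre.add him
  have hint : ∫ ω, (((1 - t ^ 2 / 2 * X ω ^ 2 : ℝ) : ℂ) + ((t * X ω : ℝ) : ℂ) * Complex.I) ∂P
      = ((1 - Var[X; P] * t ^ 2 / 2 : ℝ) : ℂ) := by
    rw [integral_add hre him, integral_mul_const, integral_complex_ofReal, integral_complex_ofReal,
      integral_const_mul, h0, integral_sub (integrable_const _) (hX2.const_mul _),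
      integral_const_mul, variance_of_integral_eq_zero hX.aemeasurable h0]
    simp
    ring
  rw [charFun_apply_real, integral_map hX.aemeasurable (by fun_prop), ← hint]
  simp_rw [← Complex.ofReal_mul]
  rw [← integral_sub hexp htaylor_int, ← integral_const_mul]
  refine norm_integral_le_of_norm_le (hX3.const_mul _) (ae_of_all _ fun ω ↦ ?_)
  rw [← htaylor, mul_assoc, ← mul_pow, ← abs_mul]
  exact norm_cexp_mul_I_sub_taylor_two_le _

lemma norm_charFun_map_sub_exp_le {X : Ω → ℝ} (hX : MemLp X 3 P) (h0 : P[X] = 0) (t : ℝ) :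
    ‖charFun (P.map X) t - (Real.exp (-(Var[X; P] * t ^ 2 / 2)) : ℂ)‖
      ≤ 5 * |t| ^ 3 * P[fun ω ↦ |X ω| ^ 3] := by
  have hgauss : ‖((1 - Var[X; P] * t ^ 2 / 2 : ℝ) : ℂ) - (Real.exp (-(Var[X; P] * t ^ 2 / 2)) : ℂ)‖
      ≤ |t| ^ 3 * P[fun ω ↦ |X ω| ^ 3] := by
    have hsq : (√Var[X; P] * t) ^ 2 = Var[X; P] * t ^ 2 := by
      rw [mul_pow, Real.sq_sqrt (variance_nonneg _ _)]
    have h := abs_exp_neg_half_sq_sub_taylor_le (√Var[X; P] * t)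
    rw [hsq, abs_mul, abs_of_nonneg (Real.sqrt_nonneg _), mul_pow, mul_comm (_ ^ 3)] at h
    rw [← Complex.ofReal_sub, Complex.norm_real, Real.norm_eq_abs, abs_sub_comm]
    exact h.trans (by gcongr; exact sqrt_variance_pow_three_le hX h0)
  calc _ ≤ 4 * |t| ^ 3 * P[fun ω ↦ |X ω| ^ 3] + |t| ^ 3 * P[fun ω ↦ |X ω| ^ 3] :=
        norm_sub_le_norm_sub_add_norm_sub _ _ _ |>.trans
          (add_le_add (norm_charFun_map_sub_taylor_two_le hX h0 t) hgauss)
    _ = 5 * |t| ^ 3 * P[fun ω ↦ |X ω| ^ 3] := by ring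

lemma norm_charFun_map_sum_sub_exp_le {ι : Type*} [Fintype ι] {X : ι → Ω → ℝ}
    (hX : ∀ i, MemLp (X i) 3 P) (h0 : ∀ i, P[X i] = 0) (hindep : iIndepFun X P) (t : ℝ) :
    ‖charFun (P.map fun ω ↦ ∑ i, X i ω) t - (Real.exp (-((∑ i, Var[X i; P]) * t ^ 2 / 2)) : ℂ)‖
      ≤ 5 * |t| ^ 3 * ∑ i, P[fun ω ↦ |X i ω| ^ 3] := by
  have hmap i : IsProbabilityMeasure (P.map (X i)) :=
    Measure.isProbabilityMeasure_map (hX i).aemeasurable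
  have hexp : Real.exp (-((∑ i, Var[X i; P]) * t ^ 2 / 2))
      = ∏ i, Real.exp (-(Var[X i; P] * t ^ 2 / 2)) := by
    rw [← Real.exp_sum, Finset.sum_neg_distrib, Finset.sum_mul, Finset.sum_div]
  rw [hindep.charFun_map_fun_sum_eq_prod fun i ↦ (hX i).aemeasurable, Finset.prod_apply, hexp,
    Complex.ofReal_prod, Finset.mul_sum]
  refine (norm_prod_sub_prod_le_sum _ (fun i _ ↦ norm_charFun_le_one t) fun i _ ↦ ?_).trans
    (Finset.sum_le_sum fun i _ ↦ norm_charFun_map_sub_exp_le (hX i) (h0 i) t)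
  rw [Complex.norm_real, Real.norm_eq_abs, Real.abs_exp, Real.exp_le_one_iff, neg_nonpos]
  have := variance_nonneg (X i) P
  positivity

end CentralLimitTheorem

theorem tendstoInDistribution_sum_of_lyapunov {Ω : ℕ → Type*} [∀ n, MeasurableSpace (Ω n)]
    {P : ∀ n, Measure (Ω n)} [∀ n, IsProbabilityMeasure (P n)]
    {ι : ℕ → Type*} [∀ n, Fintype (ι n)] {X : ∀ n, ι n → Ω n → ℝ}
    {Ω' : Type*} [MeasurableSpace Ω'] {P' : Measure Ω'} [IsProbabilityMeasure P'] {Y : Ω' → ℝ}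
    {v : ℝ≥0} (hY : HasLaw Y (gaussianReal 0 v) P')
    (hX : ∀ n i, MemLp (X n i) 3 (P n)) (h0 : ∀ n i, (P n)[X n i] = 0)
    (hindep : ∀ n, iIndepFun (X n) (P n))
    (hvar : Tendsto (fun n ↦ ∑ i, Var[X n i; P n]) atTop (𝓝 v))
    (hlyapunov : Tendsto (fun n ↦ ∑ i, (P n)[fun ω ↦ |X n i ω| ^ 3]) atTop (𝓝 0)) :
    TendstoInDistribution (fun n ω ↦ ∑ i, X n i ω) atTop Y P P' where
  forall_aemeasurable n := Finset.aemeasurable_fun_sum _ fun i _ ↦ (hX n i).aemeasurable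
  aemeasurable_limit := hY.aemeasurable
  tendsto := by
    refine ProbabilityMeasure.tendsto_iff_tendsto_charFun.2 fun t ↦ ?_
    have hgauss : Tendsto (fun n ↦ (Real.exp (-((∑ i, Var[X n i; P n]) * t ^ 2 / 2)) : ℂ)) atTop
        (𝓝 (charFun (P'.map Y) t)) := by
      rw [hY.map_eq, charFun_gaussianReal]
      convert! (Complex.continuous_ofReal.tendsto _).comp
        ((Real.continuous_exp.tendsto _).comp (((hvar.mul_const (t ^ 2)).div_const 2).neg)) using 2
      simp
    have hdiff := squeeze_zero_norm
      (fun n ↦ norm_charFun_map_sum_sub_exp_le (hX n) (h0 n) (hindep n) t)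
      (by simpa using hlyapunov.const_mul (5 * |t| ^ 3))
    simpa using hdiff.add hgauss

theorem tendsto_measureReal_le_of_tendstoInDistribution {ι Ω' : Type*} {Ω : ι → Type*}
    [∀ i, MeasurableSpace (Ω i)] {P : ∀ i, Measure (Ω i)} [∀ i, IsProbabilityMeasure (P i)]
    [MeasurableSpace Ω'] {P' : Measure Ω'} [IsProbabilityMeasure P'] {X : ∀ i, Ω i → ℝ} {Y : Ω' → ℝ}
    {l : Filter ι} (h : TendstoInDistribution X l Y P P') {x : ℝ} (hx : P'.map Y {x} = 0) :
    Tendsto (fun i ↦ (P i).real {ω | X i ω ≤ x}) l (𝓝 (cdf (P'.map Y) x)) := by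
  have := Measure.isProbabilityMeasure_map (μ := P') h.aemeasurable_limit
  have hlim := ProbabilityMeasure.tendsto_measure_of_null_frontier_of_tendsto' h.tendsto
    (E := Iic x) (by simpa using hx)
  rw [cdf_eq_real]
  refine ((ENNReal.tendsto_toReal (measure_ne_top (P'.map Y) (Iic x))).comp hlim).congr fun i ↦ ?_
  exact congrArg ENNReal.toReal
    (Measure.map_apply_of_aemeasurable (h.forall_aemeasurable i) measurableSet_Iic)

lemma variance_comp_eval {ι : Type*} [Fintype ι] {E : ι → Type*} [∀ i, MeasurableSpace (E i)]
    {μ : ∀ i, Measure (E i)} [∀ i, IsProbabilityMeasure (μ i)] {i : ι} {f : E i → ℝ}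
    (hf : AEStronglyMeasurable f (μ i)) :
    Var[fun x ↦ f (x i); Measure.pi μ] = Var[f; μ i] := by
  have hi := measurePreserving_eval μ i
  rw [← hi.map_eq] at hf
  conv_rhs => rw [← hi.map_eq]
  exact (variance_map hf.aemeasurable hi.aemeasurable).symm

section Normalization

variable {s K : ℝ} {u : ℕ → ℝ}

lemma tendsto_mul_sqrt_natCast_atTop (hs : 0 < s) : Tendsto (fun d : ℕ ↦ s * √d) atTop atTop :=
  (Real.tendsto_sqrt_atTop.comp tendsto_natCast_atTop_atTop).const_mul_atTop hs

lemma tendsto_sum_inv_mul_sqrt_sq_mul (hs : s ≠ 0) (hu : Tendsto u atTop (𝓝 (s ^ 2))) :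
    Tendsto (fun d : ℕ ↦ ∑ j : Fin d, (s * √d)⁻¹ ^ 2 * u j) atTop (𝓝 1) := by
  have hmean := hu.cesaro.div_const (s ^ 2)
  rw [div_self (pow_ne_zero 2 hs)] at hmean
  refine hmean.congr fun d ↦ ?_
  rw [← Finset.mul_sum, Finset.sum_range, inv_pow, mul_pow, Real.sq_sqrt d.cast_nonneg, mul_inv]
  ring

lemma tendsto_sum_inv_mul_sqrt_cube_mul (hs : 0 < s) (hu : ∀ j, 0 ≤ u j) (hK : ∀ j, u j ≤ K) :
    Tendsto (fun d : ℕ ↦ ∑ j : Fin d, (s * √d)⁻¹ ^ 3 * u j) atTop (𝓝 0) := by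
  have hbound : Tendsto (fun d : ℕ ↦ K / s ^ 2 * (s * √d)⁻¹) atTop (𝓝 0) := by
    simpa using (tendsto_mul_sqrt_natCast_atTop hs).inv_tendsto_atTop.const_mul (K / s ^ 2)
  refine squeeze_zero (fun d ↦ Finset.sum_nonneg fun j _ ↦ mul_nonneg (by positivity) (hu j))
    (fun d ↦ ?_) hbound
  calc ∑ j : Fin d, (s * √d)⁻¹ ^ 3 * u j ≤ ∑ _j : Fin d, (s * √d)⁻¹ ^ 3 * K := by
        gcongr with j; exact hK j
    _ = K / s ^ 2 * (s * √d)⁻¹ := by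
        rcases d.eq_zero_or_pos with rfl | hd
        · simp
        · have hsq : √(d : ℝ) ^ 2 = d := Real.sq_sqrt d.cast_nonneg
          simp only [Finset.sum_const, Finset.card_univ, Fintype.card_fin, nsmul_eq_mul]
          nth_rw 1 [← hsq]
          field_simp

end Normalization

theorem tendsto_measureReal_pi_sum_le {E : ℕ → Type*} [∀ j, MeasurableSpace (E j)]
    {μ : ∀ j, Measure (E j)} [∀ j, IsProbabilityMeasure (μ j)] {Y : ∀ j, E j → ℝ} {s K : ℝ}
    (hs : 0 < s) (hY : ∀ j, MemLp (Y j) 3 (μ j)) (h0 : ∀ j, (μ j)[Y j] = 0)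
    (hvar : Tendsto (fun j ↦ Var[Y j; μ j]) atTop (𝓝 (s ^ 2)))
    (hK : ∀ j, (μ j)[fun ω ↦ |Y j ω| ^ 3] ≤ K) (x : ℝ) :
    Tendsto (fun d : ℕ ↦ (Measure.pi fun j : Fin d ↦ μ j).real
      {k | ∑ j : Fin d, Y j (k j) ≤ x * (s * √d)}) atTop (𝓝 (cdf (gaussianReal 0 1) x)) := by
  let P (d : ℕ) : Measure (∀ j : Fin d, E j) := Measure.pi fun j ↦ μ j
  let X (d : ℕ) (j : Fin d) (k : ∀ j : Fin d, E j) : ℝ := (s * √d)⁻¹ * Y j (k j)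
  have hXvar d (j : Fin d) : Var[X d j; P d] = (s * √d)⁻¹ ^ 2 * Var[Y j; μ j] := by
    rw [variance_const_mul, variance_comp_eval (μ := fun j : Fin d ↦ μ j) (hY j).1]
  have hXthird d (j : Fin d) :
      (P d)[fun k ↦ |X d j k| ^ 3] = (s * √d)⁻¹ ^ 3 * (μ j)[fun ω ↦ |Y j ω| ^ 3] := by
    simp_rw [X, abs_mul, mul_pow, abs_of_nonneg (show 0 ≤ (s * √d)⁻¹ by positivity)]
    rw [integral_const_mul, integral_comp_eval (μ := fun j : Fin d ↦ μ j)
      (f := fun ω ↦ |Y j ω| ^ 3) ((hY j).1.norm.pow 3)]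
  have hclt : TendstoInDistribution (fun d k ↦ ∑ j, X d j k) atTop id P (gaussianReal 0 1) := by
    refine tendstoInDistribution_sum_of_lyapunov HasLaw.id (fun d j ↦ ?_) (fun d j ↦ ?_)
      (fun d ↦ ?_) ?_ ?_
    · exact ((hY j).comp_measurePreserving
        (measurePreserving_eval (fun j : Fin d ↦ μ j) j)).const_mul _
    · rw [integral_const_mul, integral_comp_eval (μ := fun j : Fin d ↦ μ j) (hY j).1, h0, mul_zero]
    · exact iIndepFun_pi (μ := fun j : Fin d ↦ μ j) (X := fun j ω ↦ (s * √d)⁻¹ * Y j ω)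
        fun j ↦ ((hY j).const_mul _).aemeasurable
    · simpa only [hXvar] using! tendsto_sum_inv_mul_sqrt_sq_mul hs.ne' hvar
    · simpa only [hXthird] using! tendsto_sum_inv_mul_sqrt_cube_mul hs
        (fun j ↦ integral_nonneg fun ω ↦ by positivity) hK
  have := nullSingletonClass_gaussianReal (μ := 0) one_ne_zero
  have hcdf := tendsto_measureReal_le_of_tendstoInDistribution hclt (x := x) (by simp)
  rw [Measure.map_id] at hcdf
  refine hcdf.congr' ?_
  filter_upwards [(tendsto_mul_sqrt_natCast_atTop hs).eventually_gt_atTop 0] with d hd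
  simp_rw [X, ← Finset.mul_sum, inv_mul_le_iff₀ hd, mul_comm x]
  rfl

section Quantile

variable {μ : Measure ℝ} {p x : ℝ}

lemma strictMono_cdf (μ : Measure ℝ) [IsProbabilityMeasure μ] [μ.IsOpenPosMeasure] :
    StrictMono (cdf μ) := fun x y hxy ↦ by
  have hgap : 0 < μ.real (Ioc x y) :=
    ENNReal.toReal_pos ((Measure.measure_Ioo_pos μ).2 hxy |>.trans_le
      (measure_mono Ioo_subset_Ioc_self)).ne' (measure_ne_top μ _)
  rw [← Iic_sdiff_Iic, measureReal_sdiff (Iic_subset_Iic.2 hxy.le) measurableSet_Iic] at hgap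
  simpa only [cdf_eq_real, sub_pos] using hgap

lemma cdf_lt_of_lt_sInf (hp : 0 < p) (hx : x < sInf {y | p ≤ cdf μ y}) : cdf μ x < p := by
  obtain ⟨y, hy⟩ := ((tendsto_cdf_atBot μ).eventually_lt_const hp).exists
  have hbdd : BddBelow {y | p ≤ cdf μ y} :=
    ⟨y, fun z hz ↦ ((monotone_cdf μ).reflect_lt (hy.trans_le hz)).le⟩
  exact lt_of_not_ge fun hpx ↦ notMem_of_lt_csInf hx hbdd hpx

lemma lt_cdf_of_sInf_lt [IsProbabilityMeasure μ] [μ.IsOpenPosMeasure] (hp : p < 1)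
    (hx : sInf {y | p ≤ cdf μ y} < x) : p < cdf μ x := by
  have hne : {y | p ≤ cdf μ y}.Nonempty :=
    ((tendsto_cdf_atTop μ).eventually_const_lt hp).exists.imp fun _ ↦ le_of_lt
  obtain ⟨y, hy, hyx⟩ := exists_lt_of_csInf_lt hne hx
  exact hy.trans_lt (strictMono_cdf μ hyx)

lemma isOpenPosMeasure_gaussianReal (m : ℝ) {v : ℝ≥0} (hv : v ≠ 0) :
    (gaussianReal m v).IsOpenPosMeasure :=
  (gaussianReal_absolutelyContinuous' m hv).isOpenPosMeasure

end Quantile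

section EssentialSupport

variable {Ω : Type*} [MeasurableSpace Ω]

/-- The minimal cardinality of a finite set carrying all but mass `δ` of the law `P`: the
exponential of the `δ`-smooth max-entropy of `P`. -/
noncomputable def essentialCard (P : Measure Ω) (δ : ℝ) : ℕ :=
  sInf {n : ℕ | ∃ S : Finset Ω, S.card ≤ n ∧ P.real (Sᶜ : Set Ω) ≤ δ}

/-- The points to which the law `P` gives mass at least `c`. The heaviest points form the optimal
set in `essentialCard`, so the latter is governed by the mass of these sets as `c` varies. -/
def heavyAtoms (P : Measure Ω) (c : ℝ) : Set Ω := {k | c ≤ P.real {k}}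

variable [MeasurableSingletonClass Ω] {P : Measure Ω} {c δ : ℝ}

section

variable [IsFiniteMeasure P]

lemma card_mul_le_measureReal {S : Finset Ω} (hS : ↑S ⊆ heavyAtoms P c) :
    S.card * c ≤ P.real S := by
  rw [← sum_measureReal_singleton, ← nsmul_eq_mul]
  exact S.card_nsmul_le_sum _ c fun k hk ↦ hS hk

lemma measureReal_le_card_mul {S : Finset Ω} (hS : Disjoint ↑S (heavyAtoms P c)) :
    P.real S ≤ S.card * c := by
  rw [← sum_measureReal_singleton, ← nsmul_eq_mul]
  exact S.sum_le_card_nsmul _ c fun k hk ↦ (not_le.1 (disjoint_left.1 hS hk)).le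

lemma hasSum_measureReal_singleton [Countable Ω] (P : Measure Ω) [IsFiniteMeasure P] :
    HasSum (fun k ↦ P.real {k}) (P.real univ) := by
  have hsum : ∑' k, P {k} = P univ := by
    simpa using P.tsum_indicator_apply_singleton univ MeasurableSet.univ
  have h := ENNReal.hasSum_toReal (f := fun k ↦ P {k}) (by simp [hsum])
  rwa [← ENNReal.tsum_toReal_eq fun _ ↦ measure_ne_top _ _, hsum] at h

lemma tsum_measureReal_singleton_compl [Countable Ω] (P : Measure Ω) [IsFiniteMeasure P]
    (S : Finset Ω) : ∑' k : {k // k ∉ S}, P.real {k.1} = P.real (Sᶜ : Set Ω) := by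
  have hP := hasSum_measureReal_singleton P
  have h := hP.summable.sum_add_tsum_subtype_compl S
  rw [hP.tsum_eq, sum_measureReal_singleton] at h
  rw [measureReal_compl S.measurableSet, ← h, add_sub_cancel_left]

lemma finite_heavyAtoms [Countable Ω] (hc : 0 < c) : (heavyAtoms P c).Finite := by
  have h := (hasSum_measureReal_singleton P).summable.tendsto_cofinite_zero.eventually_lt_const hc
  simpa only [eventually_cofinite, not_lt, heavyAtoms] using h

end

variable [IsProbabilityMeasure P]

lemma finset_nonempty_of_measureReal_compl_lt_one {S : Finset Ω}
    (hS : P.real (Sᶜ : Set Ω) < 1) : S.Nonempty := by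
  rw [probReal_compl_eq_one_sub S.measurableSet] at hS
  rw [← Finset.coe_nonempty]
  exact nonempty_of_measureReal_ne_zero (μ := P) (by linarith)

variable [Countable Ω]

lemma essentialCard_mul_le_one (hc : 0 < c) (hP : 1 - δ ≤ P.real (heavyAtoms P c)) :
    essentialCard P δ * c ≤ 1 := by
  set S := (finite_heavyAtoms (P := P) hc).toFinset
  have hcoe : (S : Set Ω) = heavyAtoms P c := Finite.coe_toFinset _
  have hle : essentialCard P δ ≤ S.card := Nat.sInf_le ⟨S, le_rfl, by
    rw [probReal_compl_eq_one_sub S.measurableSet, hcoe]; linarith⟩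
  calc essentialCard P δ * c ≤ S.card * c := by gcongr
    _ ≤ P.real S := card_mul_le_measureReal hcoe.subset
    _ ≤ 1 := measureReal_le_one

lemma exists_finset_card_le_essentialCard (P : Measure Ω) [IsProbabilityMeasure P] (hδ : 0 < δ) :
    ∃ S : Finset Ω, S.card ≤ essentialCard P δ ∧ P.real (Sᶜ : Set Ω) ≤ δ := by
  obtain ⟨S, hS⟩ := ((hasSum_measureReal_singleton P).eventually_const_lt
    (by rw [probReal_univ]; exact sub_lt_self 1 hδ : 1 - δ < P.real univ)).exists
  rw [sum_measureReal_singleton] at hS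
  refine Nat.sInf_mem (s := {n | ∃ S : Finset Ω, S.card ≤ n ∧ P.real (Sᶜ : Set Ω) ≤ δ})
    ⟨S.card, S, le_rfl, ?_⟩
  rw [probReal_compl_eq_one_sub S.measurableSet]
  linarith

lemma essentialCard_pos (P : Measure Ω) [IsProbabilityMeasure P] (hδ : δ ∈ Ioo 0 1) :
    0 < essentialCard P δ := by
  obtain ⟨S, hcard, hS⟩ := exists_finset_card_le_essentialCard P hδ.1
  exact (finset_nonempty_of_measureReal_compl_lt_one (hS.trans_lt hδ.2)).card_pos.trans_le hcard

lemma one_sub_le_measureReal_heavyAtoms_add (P : Measure Ω) [IsProbabilityMeasure P] (hδ : 0 < δ)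
    (hc : 0 ≤ c) : 1 - δ ≤ P.real (heavyAtoms P c) + essentialCard P δ * c := by
  classical
  obtain ⟨S, hcard, hS⟩ := exists_finset_card_le_essentialCard P hδ
  rw [probReal_compl_eq_one_sub S.measurableSet] at hS
  set L := S.filter (· ∉ heavyAtoms P c)
  have hcover : (S : Set Ω) ⊆ heavyAtoms P c ∪ L := fun k hk ↦
    or_iff_not_imp_left.2 fun hk' ↦ Finset.mem_coe.2 (Finset.mem_filter.2 ⟨hk, hk'⟩)
  have hlight : Disjoint (L : Set Ω) (heavyAtoms P c) :=
    disjoint_left.2 fun k hk ↦ (Finset.mem_filter.1 hk).2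
  calc 1 - δ ≤ P.real S := by linarith
    _ ≤ P.real (heavyAtoms P c) + P.real L :=
      (measureReal_mono hcover).trans (measureReal_union_le _ _)
    _ ≤ P.real (heavyAtoms P c) + L.card * c := by gcongr; exact measureReal_le_card_mul hlight
    _ ≤ P.real (heavyAtoms P c) + essentialCard P δ * c := by
      gcongr; exact (S.card_filter_le _).trans hcard

lemma log_essentialCard_le (hδ : δ ∈ Ioo 0 1) {t : ℝ}
    (hP : 1 - δ ≤ P.real (heavyAtoms P (Real.exp (-t)))) : Real.log (essentialCard P δ) ≤ t := by
  have h := essentialCard_mul_le_one (Real.exp_pos _) hP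
  rw [Real.exp_neg, ← div_eq_mul_inv, div_le_one (Real.exp_pos t)] at h
  exact (Real.log_le_iff_le_exp (mod_cast essentialCard_pos P hδ)).2 h

lemma add_log_le_log_essentialCard (hδ : δ ∈ Ioo 0 1) {t r : ℝ} (hr : r < 1 - δ)
    (hP : P.real (heavyAtoms P (Real.exp (-t))) ≤ r) :
    t + Real.log (1 - δ - r) ≤ Real.log (essentialCard P δ) := by
  have hpos : (0 : ℝ) < essentialCard P δ := mod_cast essentialCard_pos P hδ
  have h := one_sub_le_measureReal_heavyAtoms_add P hδ.1 (Real.exp_pos (-t)).le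
  have hmass : 1 - δ - r ≤ essentialCard P δ * Real.exp (-t) := by linarith
  have hlog := Real.log_le_log (by linarith) hmass
  rw [Real.log_mul hpos.ne' (Real.exp_pos _).ne', Real.log_exp] at hlog
  linarith

end EssentialSupport

theorem tendsto_log_essentialCard {ι : Type*} {l : Filter ι} {Ω : ι → Type*}
    [∀ i, MeasurableSpace (Ω i)] [∀ i, MeasurableSingletonClass (Ω i)] [∀ i, Countable (Ω i)]
    {P : ∀ i, Measure (Ω i)} [∀ i, IsProbabilityMeasure (P i)] {a b : ι → ℝ} {F : ℝ → ℝ}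
    {δ q : ℝ} (hδ : δ ∈ Ioo 0 1) (hb : Tendsto b l atTop)
    (hF : ∀ x, Tendsto (fun i ↦ (P i).real (heavyAtoms (P i) (Real.exp (-(a i + x * b i))))) l
      (𝓝 (F x)))
    (hlt : ∀ x < q, F x < 1 - δ) (hgt : ∀ x > q, 1 - δ < F x) :
    Tendsto (fun i ↦ (Real.log (essentialCard (P i) δ) - a i) / b i) l (𝓝 q) := by
  refine tendsto_order.2 ⟨fun y hy ↦ ?_, fun y hy ↦ ?_⟩
  · obtain ⟨x, hyx, hxq⟩ := exists_between hy
    obtain ⟨r, hxr, hr⟩ := exists_between (hlt x hxq)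
    have herror : Tendsto (fun i ↦ x + Real.log (1 - δ - r) / b i) l (𝓝 x) := by
      simpa using (hb.const_div_atTop _).const_add x
    filter_upwards [(hF x).eventually_lt_const hxr, herror.eventually_const_lt hyx,
      hb.eventually_gt_atTop 0] with i hi hyi hbi
    refine hyi.trans_le ((le_div_iff₀ hbi).2 ?_)
    have := add_log_le_log_essentialCard hδ hr hi.le
    rw [add_mul, div_mul_cancel₀ _ hbi.ne']
    linarith
  · obtain ⟨x, hqx, hxy⟩ := exists_between hy
    filter_upwards [(hF x).eventually_const_lt (hgt x hqx), hb.eventually_gt_atTop 0] with i hi hbi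
    refine ((div_le_iff₀ hbi).2 ?_).trans_lt hxy
    linarith [log_essentialCard_le hδ hi.le]

section GeometricMoments

variable {p : unitInterval}

lemma hasSum_geometricMeasure_choose (hp : p ≠ 0) (r : ℕ) :
    HasSum (fun n ↦ (1 - p : ℝ) ^ n * p * ((n + r).choose r : ℝ)) ((p : ℝ)⁻¹ ^ r) := by
  have hp0 : (0 : ℝ) < p := unitInterval.pos_iff_ne_zero.2 hp
  have hlt : ‖(1 - p : ℝ)‖ < 1 := by
    rw [Real.norm_of_nonneg (unitInterval.one_minus_nonneg p)]
    linarith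
  have h := (hasSum_choose_mul_geometric_of_norm_lt_one r hlt).mul_right (p : ℝ)
  convert! h using 1
  · ext n; ring
  · rw [sub_sub_cancel, pow_succ, inv_pow]; field_simp

lemma integrable_choose_geometricMeasure (hp : p ≠ 0) (r : ℕ) :
    Integrable (fun n : ℕ ↦ ((n + r).choose r : ℝ)) (geometricMeasure p) :=
  (integrable_geometricMeasure_iff hp).2
    (by simpa only [Real.norm_natCast] using (hasSum_geometricMeasure_choose hp r).summable)

lemma integral_choose_geometricMeasure (hp : p ≠ 0) (r : ℕ) :
    ∫ n : ℕ, ((n + r).choose r : ℝ) ∂geometricMeasure p = (p : ℝ)⁻¹ ^ r := by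
  simpa only [smul_eq_mul, (hasSum_geometricMeasure_choose hp r).tsum_eq]
    using integral_geometricMeasure hp fun n ↦ ((n + r).choose r : ℝ)

lemma natCast_pow_le_factorial_mul_choose (n r : ℕ) : (n : ℝ) ^ r ≤ r ! * (n + r).choose r := by
  have h := Nat.pow_le_choose (α := ℝ) r (n + r)
  rw [div_le_iff₀' (by positivity)] at h
  refine le_trans ?_ h
  gcongr
  omega

lemma memLp_natCast_geometricMeasure (hp : p ≠ 0) {r : ℕ} (hr : r ≠ 0) :
    MemLp (fun n : ℕ ↦ (n : ℝ)) r (geometricMeasure p) := by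
  rw [← integrable_norm_rpow_iff .of_discrete (mod_cast hr) (ENNReal.natCast_ne_top r)]
  refine ((integrable_choose_geometricMeasure hp r).const_mul (r ! : ℝ)).mono' .of_discrete
    (ae_of_all _ fun n ↦ ?_)
  simpa using natCast_pow_le_factorial_mul_choose n r

lemma integral_natCast_pow_geometricMeasure_le (hp : p ≠ 0) (r : ℕ) :
    ∫ n : ℕ, (n : ℝ) ^ r ∂geometricMeasure p ≤ r ! * (p : ℝ)⁻¹ ^ r := by
  rw [← integral_choose_geometricMeasure hp, ← integral_const_mul]
  exact integral_mono_of_nonneg (ae_of_all _ fun n ↦ by positivity)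
    ((integrable_choose_geometricMeasure hp r).const_mul _)
    (ae_of_all _ fun n ↦ natCast_pow_le_factorial_mul_choose n r)

lemma integral_natCast_geometricMeasure (hp : p ≠ 0) :
    ∫ n : ℕ, (n : ℝ) ∂geometricMeasure p = (1 - p) / p := by
  have hp0 : (p : ℝ) ≠ 0 := unitInterval.coe_ne_zero.2 hp
  calc ∫ n : ℕ, (n : ℝ) ∂geometricMeasure p
      = ∫ n : ℕ, (((n + 1).choose 1 : ℝ) - 1) ∂geometricMeasure p := by simp
    _ = (p : ℝ)⁻¹ ^ 1 - 1 := by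
        rw [integral_sub (integrable_choose_geometricMeasure hp 1) (integrable_const _),
          integral_choose_geometricMeasure hp, integral_const, probReal_univ, one_smul]
    _ = (1 - p) / p := by field_simp

lemma variance_natCast_geometricMeasure (hp : p ≠ 0) :
    Var[fun n : ℕ ↦ (n : ℝ); geometricMeasure p] = (1 - p) / p ^ 2 := by
  have hchoose (n : ℕ) : (n : ℝ) ^ 2 = 2 * (n + 2).choose 2 - (3 * n + 2) := by
    rw [Nat.cast_choose_two]; push_cast; ring
  have hp0 : (p : ℝ) ≠ 0 := unitInterval.coe_ne_zero.2 hp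
  have hint1 : Integrable (fun n : ℕ ↦ (n : ℝ)) (geometricMeasure p) :=
    memLp_one_iff_integrable.1 (mod_cast memLp_natCast_geometricMeasure hp one_ne_zero)
  have hlin : Integrable (fun n : ℕ ↦ 3 * (n : ℝ) + 2) (geometricMeasure p) :=
    (hint1.const_mul 3).add (integrable_const 2)
  rw [variance_eq_sub (mod_cast memLp_natCast_geometricMeasure hp two_ne_zero)]
  simp_rw [Pi.pow_apply, hchoose]
  rw [integral_sub ((integrable_choose_geometricMeasure hp 2).const_mul 2) hlin,
    integral_add (hint1.const_mul 3) (integrable_const 2), integral_const_mul, integral_const_mul,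
    integral_choose_geometricMeasure hp, integral_natCast_geometricMeasure hp, integral_const,
    probReal_univ]
  simp only [smul_eq_mul]
  field_simp
  ring

lemma abs_sub_pow_le_pow_add_pow {a b : ℝ} (ha : 0 ≤ a) (hb : 0 ≤ b) (r : ℕ) :
    |a - b| ^ r ≤ a ^ r + b ^ r := by
  rcases le_total a b with h | h
  · calc |a - b| ^ r ≤ b ^ r := by gcongr; rw [abs_le]; constructor <;> linarith
      _ ≤ a ^ r + b ^ r := by simpa using pow_nonneg ha r
  · calc |a - b| ^ r ≤ a ^ r := by gcongr; rw [abs_le]; constructor <;> linarith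
      _ ≤ a ^ r + b ^ r := by simpa using pow_nonneg hb r

lemma integral_abs_sub_mean_pow_geometricMeasure_le (hp : p ≠ 0) {r : ℕ} (hr : r ≠ 0) :
    ∫ n : ℕ, |(n : ℝ) - (1 - p) / p| ^ r ∂geometricMeasure p ≤ (r ! + 1) * (p : ℝ)⁻¹ ^ r := by
  have hp0 : (0 : ℝ) < p := unitInterval.pos_iff_ne_zero.2 hp
  have hmean : 0 ≤ (1 - p : ℝ) / p := div_nonneg (unitInterval.one_minus_nonneg p) hp0.le
  have hmean_le : (1 - p : ℝ) / p ≤ (p : ℝ)⁻¹ := by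
    rw [div_eq_mul_inv]
    exact mul_le_of_le_one_left (by positivity) (unitInterval.one_minus_le_one p)
  have hint : Integrable (fun n : ℕ ↦ (n : ℝ) ^ r) (geometricMeasure p) := by
    simpa using (memLp_natCast_geometricMeasure hp hr).integrable_norm_pow hr
  calc ∫ n : ℕ, |(n : ℝ) - (1 - p) / p| ^ r ∂geometricMeasure p
      ≤ ∫ n : ℕ, ((n : ℝ) ^ r + ((1 - p) / p) ^ r) ∂geometricMeasure p :=
        integral_mono_of_nonneg (ae_of_all _ fun n ↦ by positivity)
          (hint.add (integrable_const _))
          (ae_of_all _ fun n ↦ abs_sub_pow_le_pow_add_pow n.cast_nonneg hmean r)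
    _ = ∫ n : ℕ, (n : ℝ) ^ r ∂geometricMeasure p + ((1 - p) / p) ^ r := by
        rw [integral_add hint (integrable_const _), integral_const, probReal_univ, one_smul]
    _ ≤ r ! * (p : ℝ)⁻¹ ^ r + (p : ℝ)⁻¹ ^ r := by
        gcongr
        exact integral_natCast_pow_geometricMeasure_le hp r
    _ = (r ! + 1) * (p : ℝ)⁻¹ ^ r := by ring

end GeometricMoments

section EigenvalueLaw

/-- The geometric law on `ℕ` with mass `(1 - w) * w ^ n` at `n`, for `w ∈ (0, 1)`; the projection
onto the unit interval only serves to bundle the success probability `1 - w`. -/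
noncomputable def geometricLaw (w : ℝ) : Measure ℕ :=
  geometricMeasure (projIcc 0 1 zero_le_one (1 - w))

/-- The information `-log ((1 - w) * w ^ n)` of the outcome `n` of `geometricLaw w`, centred by its
mean, the entropy `|log w| * w / (1 - w) + |log (1 - w)|`. -/
noncomputable def centredInfo (w : ℝ) (n : ℕ) : ℝ := |Real.log w| * (n - w / (1 - w))

/-- The law on multi-indices whose point masses are the eigenvalues `λ_d(k)`. -/
noncomputable def eigenvalueLaw (ω : ℕ → ℝ) (d : ℕ) : Measure (Fin d → ℕ) :=
  Measure.pi fun j ↦ geometricLaw (ω j)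

instance isProbabilityMeasure_geometricLaw (w : ℝ) :
    IsProbabilityMeasure (geometricLaw w) := by
  unfold geometricLaw; infer_instance

instance isProbabilityMeasure_eigenvalueLaw (ω : ℕ → ℝ) (d : ℕ) :
    IsProbabilityMeasure (eigenvalueLaw ω d) := by
  unfold eigenvalueLaw; infer_instance

variable {w : ℝ}

lemma coe_projIcc_one_sub (hw : w ∈ Ioo 0 1) :
    (projIcc 0 1 zero_le_one (1 - w) : ℝ) = 1 - w := by
  rw [projIcc_of_mem zero_le_one ⟨by linarith [hw.2], by linarith [hw.1]⟩]

lemma projIcc_one_sub_ne_zero (hw : w ∈ Ioo 0 1) : projIcc (0 : ℝ) 1 zero_le_one (1 - w) ≠ 0 :=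
  unitInterval.coe_ne_zero.1 (by rw [coe_projIcc_one_sub hw]; linarith [hw.2])

lemma measureReal_singleton_geometricLaw (hw : w ∈ Ioo 0 1) (n : ℕ) :
    (geometricLaw w).real {n} = (1 - w) * w ^ n := by
  rw [geometricLaw, geometricMeasure_real_singleton (projIcc_one_sub_ne_zero hw),
    coe_projIcc_one_sub hw, sub_sub_cancel, mul_comm]

lemma measureReal_singleton_geometricLaw_eq_exp (hw : w ∈ Ioo 0 1) (n : ℕ) :
    (geometricLaw w).real {n} = Real.exp
      (-(|Real.log w| * w / (1 - w) + |Real.log (1 - w)| + centredInfo w n)) := by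
  have hinfo : -(|Real.log w| * w / (1 - w) + |Real.log (1 - w)| + centredInfo w n)
      = Real.log (1 - w) + n * Real.log w := by
    rw [centredInfo, abs_of_neg (Real.log_neg hw.1 hw.2),
      abs_of_neg (Real.log_neg (sub_pos.2 hw.2) (by linarith [hw.1]))]
    ring
  rw [hinfo, Real.exp_add, Real.exp_log (sub_pos.2 hw.2), Real.exp_nat_mul, Real.exp_log hw.1,
    measureReal_singleton_geometricLaw hw]

lemma dslope_log_one_eq (hw : w ∈ Ioo 0 1) : dslope Real.log 1 w = |Real.log w| / (1 - w) := by
  rw [dslope_of_ne _ hw.2.ne, slope_def_field, Real.log_one, abs_of_neg (Real.log_neg hw.1 hw.2),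
    sub_zero, ← neg_sub 1 w, div_neg, neg_div]

lemma memLp_centredInfo (hw : w ∈ Ioo 0 1) {r : ℕ} (hr : r ≠ 0) :
    MemLp (centredInfo w) r (geometricLaw w) :=
  ((memLp_natCast_geometricMeasure (projIcc_one_sub_ne_zero hw) hr).sub (memLp_const _)).const_mul _

lemma integral_centredInfo (hw : w ∈ Ioo 0 1) : ∫ n, centredInfo w n ∂geometricLaw w = 0 := by
  have hp := projIcc_one_sub_ne_zero hw
  have hint := memLp_one_iff_integrable.1 (mod_cast memLp_natCast_geometricMeasure hp one_ne_zero)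
  simp_rw [centredInfo, geometricLaw]
  rw [integral_const_mul, integral_sub hint (integrable_const _),
    integral_natCast_geometricMeasure hp, integral_const, probReal_univ, coe_projIcc_one_sub hw]
  simp

lemma variance_centredInfo (hw : w ∈ Ioo 0 1) :
    Var[centredInfo w; geometricLaw w] = dslope Real.log 1 w ^ 2 * w := by
  simp_rw +unfoldPartialApp [centredInfo, geometricLaw]
  rw [variance_const_mul, variance_sub_const .of_discrete,
    variance_natCast_geometricMeasure (projIcc_one_sub_ne_zero hw), coe_projIcc_one_sub hw,
    dslope_log_one_eq hw, sub_sub_cancel, sq_abs, div_pow, sq_abs]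
  ring

lemma integral_abs_centredInfo_pow_le (hw : w ∈ Ioo 0 1) {r : ℕ} (hr : r ≠ 0) :
    ∫ n, |centredInfo w n| ^ r ∂geometricLaw w ≤ (r ! + 1) * dslope Real.log 1 w ^ r := by
  have h := integral_abs_sub_mean_pow_geometricMeasure_le (projIcc_one_sub_ne_zero hw) hr
  rw [coe_projIcc_one_sub hw, sub_sub_cancel] at h
  simp_rw [centredInfo, abs_mul, abs_abs, mul_pow]
  rw [integral_const_mul, dslope_log_one_eq hw, div_pow]
  calc |Real.log w| ^ r * ∫ n : ℕ, |(n : ℝ) - w / (1 - w)| ^ r ∂geometricLaw w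
      ≤ |Real.log w| ^ r * ((r ! + 1) * (1 - w)⁻¹ ^ r) := by gcongr; exact h
    _ = (r ! + 1) * (|Real.log w| ^ r / (1 - w) ^ r) := by rw [inv_pow]; ring

variable {ω : ℕ → ℝ} {d : ℕ}

lemma measureReal_singleton_eigenvalueLaw (ω : ℕ → ℝ) (k : Fin d → ℕ) :
    (eigenvalueLaw ω d).real {k} = ∏ j : Fin d, (geometricLaw (ω j)).real {k j} := by
  simp_rw [measureReal_def, eigenvalueLaw, Measure.pi_singleton, ENNReal.toReal_prod]

lemma heavyAtoms_eigenvalueLaw (hω : ∀ j, ω j ∈ Ioo 0 1) (y : ℝ) :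
    heavyAtoms (eigenvalueLaw ω d) (Real.exp (-(aSeq ω d + y)))
      = {k | ∑ j : Fin d, centredInfo (ω j) (k j) ≤ y} := by
  ext k
  have hmass : (eigenvalueLaw ω d).real {k}
      = Real.exp (-(aSeq ω d + ∑ j : Fin d, centredInfo (ω j) (k j))) := by
    simp_rw [measureReal_singleton_eigenvalueLaw, measureReal_singleton_geometricLaw_eq_exp (hω _)]
    rw [← Real.exp_sum, Finset.sum_neg_distrib, Finset.sum_add_distrib, aSeq, Finset.sum_range]
  rw [heavyAtoms, mem_ofPred_eq, hmass, Real.exp_le_exp, neg_le_neg_iff, add_le_add_iff_left]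
  rfl

lemma avgComplexity_eq_essentialCard (hω : ∀ j, ω j ∈ Ioo 0 1) {ε : ℝ} (hε : ε ^ 2 < 1) :
    avgComplexity ω d ε = essentialCard (eigenvalueLaw ω d) (ε ^ 2) := by
  have htail (S : Finset (Fin d → ℕ)) :
      ∑' k : {k // k ∉ S}, ∏ j : Fin d, (1 - ω j) * ω j ^ k.1 j
        = (eigenvalueLaw ω d).real (Sᶜ : Set (Fin d → ℕ)) := by
    simp_rw [← tsum_measureReal_singleton_compl, measureReal_singleton_eigenvalueLaw,
      measureReal_singleton_geometricLaw (hω _)]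
  simp_rw [avgComplexity, essentialCard, htail]
  congr 1 with n
  refine and_iff_right_of_imp ?_
  rintro ⟨S, hcard, hS⟩
  exact (finset_nonempty_of_measureReal_compl_lt_one (hS.trans_lt hε)).card_pos.trans_le hcard

lemma continuousAt_dslope_log_one (hw : 0 < w) : ContinuousAt (dslope Real.log 1) w := by
  rcases eq_or_ne w 1 with rfl | hw1
  · exact continuousAt_dslope_same.2 (Real.differentiableAt_log one_ne_zero)
  · exact (continuousAt_dslope_of_ne hw1).2 (Real.continuousAt_log hw.ne')

lemma dslope_log_one_pos (hw : w ∈ Ioc 0 1) : 0 < dslope Real.log 1 w := by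
  rcases hw.2.eq_or_lt with rfl | hw1
  · simp
  · rw [dslope_log_one_eq ⟨hw.1, hw1⟩]
    exact div_pos (abs_pos.2 (Real.log_neg hw.1 hw1).ne) (sub_pos.2 hw1)

theorem tendsto_measureReal_heavyAtoms_eigenvalueLaw (hω : ∀ j, ω j ∈ Ioo 0 1)
    (hlim : Tendsto ω atTop (𝓝 w)) (hw : 0 < w) (x : ℝ) :
    Tendsto (fun d : ℕ ↦ (eigenvalueLaw ω d).real (heavyAtoms (eigenvalueLaw ω d)
      (Real.exp (-(aSeq ω d + x * (dslope Real.log 1 w * √w * √d)))))) atTop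
      (𝓝 (stdGaussianCDF x)) := by
  have hslope := (continuousAt_dslope_log_one hw).tendsto.comp hlim
  have hρ : 0 < dslope Real.log 1 w * √w :=
    mul_pos (dslope_log_one_pos ⟨hw, le_of_tendsto' hlim fun j ↦ (hω j).2.le⟩) (Real.sqrt_pos.2 hw)
  have hvar : Tendsto (fun j ↦ Var[centredInfo (ω j); geometricLaw (ω j)]) atTop
      (𝓝 ((dslope Real.log 1 w * √w) ^ 2)) := by
    simp_rw [variance_centredInfo (hω _), mul_pow, Real.sq_sqrt hw.le]
    exact (hslope.pow 2).mul hlim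
  obtain ⟨K, hK⟩ := ((hslope.pow 3).const_mul (3 ! + 1 : ℝ)).bddAbove_range
  simp_rw [heavyAtoms_eigenvalueLaw hω]
  exact tendsto_measureReal_pi_sum_le hρ (fun j ↦ mod_cast memLp_centredInfo (hω j) three_ne_zero)
    (fun j ↦ integral_centredInfo (hω j)) hvar
    (fun j ↦ (integral_abs_centredInfo_pow_le (hω j) three_ne_zero).trans
      (hK (mem_range_self j))) x

end EigenvalueLaw

theorem tendsto_log_avgComplexity {ω : ℕ → ℝ} {w : ℝ} (hω : ∀ j, ω j ∈ Ioo 0 1)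
    (hlim : Tendsto ω atTop (𝓝 w)) (hw : 0 < w) {ε : ℝ} (hε : ε ∈ Ioo 0 1) :
    Tendsto (fun d : ℕ ↦ (Real.log (avgComplexity ω d ε) - aSeq ω d)
      / (dslope Real.log 1 w * √w * √d)) atTop (𝓝 (stdGaussianQuantile (1 - ε ^ 2))) := by
  have hε2 : ε ^ 2 ∈ Ioo 0 1 := ⟨pow_pos hε.1 2, pow_lt_one₀ hε.1.le hε.2 two_ne_zero⟩
  have hw1 : w ≤ 1 := le_of_tendsto' hlim fun j ↦ (hω j).2.le
  have := isOpenPosMeasure_gaussianReal 0 one_ne_zero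
  simp_rw [avgComplexity_eq_essentialCard hω hε2.2]
  exact tendsto_log_essentialCard hε2
    (tendsto_mul_sqrt_natCast_atTop (mul_pos (dslope_log_one_pos ⟨hw, hw1⟩) (Real.sqrt_pos.2 hw)))
    (tendsto_measureReal_heavyAtoms_eigenvalueLaw hω hlim hw)
    (fun x ↦ cdf_lt_of_lt_sInf (sub_pos.2 hε2.2))
    (fun x ↦ lt_cdf_of_sInf_lt (sub_lt_self 1 hε2.1))

section ScaleParameter

lemma omegaFn_eq {s : ℝ} (hs : 0 ≤ s) :
    omegaFn s = (1 + (s ^ 2 + s * √(s ^ 2 + 4)) / 2)⁻¹ := by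
  rcases hs.eq_or_lt with rfl | hs
  · simp [omegaFn]
  · have hsqrt : s ^ 2 + 4 = s ^ 2 * (1 + 4 / s ^ 2) := by field_simp
    rw [omegaFn, hsqrt, Real.sqrt_mul (by positivity), Real.sqrt_sq hs.le]
    ring

lemma omegaFn_pos (s : ℝ) : 0 < omegaFn s := by
  unfold omegaFn; positivity

lemma omegaFn_mem_Ioo_s16 {s : ℝ} (hs : 0 < s) : omegaFn s ∈ Ioo 0 1 :=
  ⟨omegaFn_pos s, inv_lt_one_of_one_lt₀ (lt_add_of_pos_right 1 (by positivity))⟩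

lemma continuousOn_omegaFn : ContinuousOn omegaFn (Ici 0) := by
  refine ContinuousOn.congr (ContinuousOn.inv₀ (by fun_prop) fun s hs ↦ ?_) fun s hs ↦ omegaFn_eq hs
  have hs : 0 ≤ s := hs
  positivity

lemma dslope_log_one_omegaFn_mul_sqrt {s : ℝ} (hs : 0 ≤ s) :
    dslope Real.log 1 (omegaFn s) * √(omegaFn s)
      = if s = 0 then 1 else |Real.log (omegaFn s)| * √(omegaFn s) / (1 - omegaFn s) := by
  split_ifs with h
  · simp [omegaFn, h]
  · rw [dslope_log_one_eq (omegaFn_mem_Ioo_s16 (hs.lt_of_ne' h)), div_mul_eq_mul_div]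

end ScaleParameter

/-- If `σ_j → σ ∈ [0,∞)`, then `ln n_d(ε) = a_d + Φ⁻¹(1-ε²) b_d + o(b_d)` with `b_d = ρ √d`. -/
theorem logAsymptotics_constant_scale (σseq : ℕ → ℝ) (hpos : ∀ j, 0 < σseq j)
    (σ : ℝ) (hσ : 0 ≤ σ) (hlim : Tendsto σseq atTop (nhds σ)) :
    ∀ ε ∈ Set.Ioo (0 : ℝ) 1,
      Tendsto (fun d : ℕ =>
          (Real.log (avgComplexity (fun j => omegaFn (σseq j)) d ε)
              - aSeq (fun j => omegaFn (σseq j)) d)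
            / ((if σ = 0 then (1 : ℝ)
                else |Real.log (omegaFn σ)| * Real.sqrt (omegaFn σ) / (1 - omegaFn σ))
              * Real.sqrt d))
        atTop (nhds (stdGaussianQuantile (1 - ε ^ 2))) := by
  intro ε hε
  have hω : Tendsto (fun j ↦ omegaFn (σseq j)) atTop (𝓝 (omegaFn σ)) :=
    (continuousOn_omegaFn σ hσ).tendsto.comp
      (tendsto_nhdsWithin_iff.2 ⟨hlim, .of_forall fun j ↦ (hpos j).le⟩)
  rw [← dslope_log_one_omegaFn_mul_sqrt hσ]
  exact tendsto_log_avgComplexity (fun j ↦ omegaFn_mem_Ioo_s16 (hpos j)) hω (omegaFn_pos σ) hε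
end

section
/- Let (σ_j)_{j≥1} be a sequence of positive real numbers satisfying σ_j²/(β j^α) → 1 as j → ∞ for some constants α ∈ (0,1) and β > 0, let ω_j = ω(σ_j), and let n_d(ε) be the average case approximation complexity built from (ω_j). Define a_d = Σ_{j=1}^d ( |ln ω_j| ω_j/(1−ω_j) + |ln(1−ω_j)| ) and b_d = (α/√((1−α)β)) · d^{(1−α)/2} · ln d. Then for every ε ∈ (0,1), (ln n_d(ε) − a_d)/b_d → Φ⁻¹(1 − ε²) as d → ∞, where Φ is the cumulative distribution function of the standard Gaussian law and Φ⁻¹(p) = inf{x ∈ ℝ : Φ(x) ≥ p}. -/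
open Filter Set

/-!
The eigenvalues `λ_d(k)` are the masses of a probability law on multi-indices `k`, under which the
coordinates `k_j` are independent and geometric with mean `ω_j / (1 - ω_j)`. Under this law
`-log λ_d(k)` is a sum of independent terms with mean `a_d`, and since `σ_j² ~ β j ^ α` forces
`ω_j ~ (β j ^ α)⁻¹`, its variance is equivalent to `b_d²` while its third absolute moments sum to
`o(b_d³)`. By Lyapunov's theorem the eigenvalues above `exp (-(a_d + x b_d))` have total mass
tending to `Φ(x)`. There are at most `exp (a_d + x b_d)` of them, and any set capturing a definite
amount more than `Φ(x)` must contain of the order of `exp (a_d + x b_d)` smaller eigenvalues.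
Hence `log n_d(ε) = a_d + x b_d + o(b_d)` at the `x` with `Φ(x) = 1 - ε²`.
-/

open MeasureTheory ProbabilityTheory Asymptotics
open scoped Topology unitInterval

namespace AverageCase

/-! ### Capturing the mass of a discrete law -/

section Quantile

variable {μ : Measure ℝ} {p x : ℝ}

/-- The quantile function of a law `μ` on `ℝ`, i.e. the generalised inverse of its distribution
function. It takes a junk value unless `p ∈ (0, 1)`. -/
noncomputable def quantile (μ : Measure ℝ) (p : ℝ) : ℝ :=
  sInf {x | p ≤ cdf μ x}

lemma cdf_lt_of_lt_quantile (hp : 0 < p) (hx : x < quantile μ p) : cdf μ x < p := by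
  by_contra! hpx
  obtain ⟨y, hy⟩ := eventually_atBot.mp ((tendsto_cdf_atBot μ).eventually_lt_const hp)
  have bddBelow : BddBelow {x | p ≤ cdf μ x} :=
    ⟨y, fun z hz => le_of_not_ge fun hzy => (hy z hzy).not_ge hz⟩
  exact (csInf_le bddBelow hpx).not_gt hx

variable [IsProbabilityMeasure μ] [μ.IsOpenPosMeasure]

lemma strictMono_cdf : StrictMono (cdf μ) := by
  intro x y hxy
  have pos : 0 < μ.real (Ioc x y) :=
    (ENNReal.toReal_pos ((Measure.measure_Ioo_pos μ).mpr hxy).ne' (measure_ne_top μ _)).trans_le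
      (measureReal_mono Ioo_subset_Ioc_self)
  rw [cdf_eq_real, cdf_eq_real, ← Iic_union_Ioc_eq_Iic hxy.le,
    measureReal_union (Iic_disjoint_Ioc le_rfl) measurableSet_Ioc]
  linarith

lemma lt_cdf_of_quantile_lt (hp : p < 1) (hx : quantile μ p < x) : p < cdf μ x := by
  obtain ⟨z, hz⟩ := ((tendsto_cdf_atTop μ).eventually_const_lt hp).exists
  obtain ⟨y, hy, hyx⟩ := exists_lt_of_csInf_lt (s := {x | p ≤ cdf μ x}) ⟨z, hz.le⟩ hx
  exact hy.trans_lt (strictMono_cdf hyx)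

end Quantile

section CaptureNumber

variable {K : Type*} [MeasurableSpace K] {P : Measure K} {δ t : ℝ}

/-- The least number of points that carry all but `δ` of the mass of a law. When `P` gives the
eigenvalues of a covariance operator of trace one, this is the average case approximation
complexity at level `√δ`. -/
noncomputable def captureNumber (P : Measure K) (δ : ℝ) : ℕ :=
  sInf {n | ∃ S : Finset K, S.card ≤ n ∧ P.real (S : Set K)ᶜ ≤ δ}

/-- The points whose mass is at least `t`. -/
def atomsAbove (P : Measure K) (t : ℝ) : Set K :=
  {k | t ≤ P.real {k}}

lemma captureNumber_le_card {S : Finset K} (hS : P.real (S : Set K)ᶜ ≤ δ) :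
    captureNumber P δ ≤ S.card :=
  Nat.sInf_le ⟨S, le_rfl, hS⟩

variable [MeasurableSingletonClass K] [IsProbabilityMeasure P]

lemma card_mul_le_one_of_subset_atomsAbove {S : Finset K} (hS : ↑S ⊆ atomsAbove P t) :
    S.card * t ≤ 1 :=
  calc S.card * t = ∑ _k ∈ S, t := by rw [Finset.sum_const, nsmul_eq_mul]
    _ ≤ ∑ k ∈ S, P.real {k} := Finset.sum_le_sum fun k hk => hS hk
    _ = P.real S := sum_measureReal_singleton S
    _ ≤ 1 := measureReal_le_one

lemma finite_atomsAbove (ht : 0 < t) : (atomsAbove P t).Finite := by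
  by_contra! infinite
  obtain ⟨n, hn⟩ := exists_nat_gt t⁻¹
  obtain ⟨S, hS, rfl⟩ := infinite.exists_subset_card_eq n
  have : 1 < S.card * t := (inv_lt_iff_one_lt_mul₀ ht).mp hn
  exact (card_mul_le_one_of_subset_atomsAbove hS).not_gt this

lemma captureNumber_mul_le_one (ht : 0 < t) (h : 1 - δ ≤ P.real (atomsAbove P t)) :
    captureNumber P δ * t ≤ 1 := by
  let S := (finite_atomsAbove (P := P) ht).toFinset
  have coe_S : (S : Set K) = atomsAbove P t := Set.Finite.coe_toFinset _
  have captured : P.real (S : Set K)ᶜ ≤ δ := by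
    rw [probReal_compl_eq_one_sub S.measurableSet, coe_S]
    linarith
  calc captureNumber P δ * t ≤ S.card * t := by
        gcongr
        exact captureNumber_le_card captured
    _ ≤ 1 := card_mul_le_one_of_subset_atomsAbove coe_S.subset

variable [Countable K]

lemma hasSum_measureReal_singleton : HasSum (fun k => P.real {k}) 1 := by
  have total := Measure.tsum_indicator_apply_singleton P univ MeasurableSet.univ
  simp only [indicator_univ, measure_univ] at total
  simpa [measureReal_def, ← ENNReal.tsum_toReal_eq, total] using
    ENNReal.hasSum_toReal (f := fun k => P {k}) (by simp [total])

lemma tsum_measureReal_singleton_notMem (S : Finset K) :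
    ∑' k : {k // k ∉ S}, P.real {k.1} = P.real (S : Set K)ᶜ := by
  have total := hasSum_measureReal_singleton (P := P)
  have split := total.summable.sum_add_tsum_subtype_compl S
  rw [total.tsum_eq, sum_measureReal_singleton] at split
  rw [probReal_compl_eq_one_sub S.measurableSet]
  linarith

lemma exists_finset_measureReal_compl_le (hδ : 0 < δ) :
    ∃ S : Finset K, P.real (S : Set K)ᶜ ≤ δ := by
  obtain ⟨S, hS⟩ :=
    ((hasSum_measureReal_singleton (P := P)).eventually_const_le (sub_lt_self 1 hδ)).exists
  refine ⟨S, ?_⟩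
  rw [sum_measureReal_singleton] at hS
  rw [probReal_compl_eq_one_sub S.measurableSet]
  linarith

lemma exists_finset_card_le_captureNumber (hδ : 0 < δ) :
    ∃ S : Finset K, S.card ≤ captureNumber P δ ∧ P.real (S : Set K)ᶜ ≤ δ := by
  obtain ⟨S, hS⟩ := exists_finset_measureReal_compl_le (P := P) hδ
  exact Nat.sInf_mem (s := {n | ∃ S : Finset K, S.card ≤ n ∧ P.real (S : Set K)ᶜ ≤ δ})
    ⟨S.card, S, le_rfl, hS⟩

lemma one_sub_le_measureReal_atomsAbove_add (hδ : 0 < δ) (ht : 0 ≤ t) :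
    1 - δ ≤ P.real (atomsAbove P t) + captureNumber P δ * t := by
  classical
  obtain ⟨S, card_le, hS⟩ := exists_finset_card_le_captureNumber (P := P) hδ
  rw [probReal_compl_eq_one_sub S.measurableSet, ← sum_measureReal_singleton,
    ← Finset.sum_filter_add_sum_filter_not S (· ∈ atomsAbove P t)] at hS
  have large : ∑ k ∈ S with k ∈ atomsAbove P t, P.real {k} ≤ P.real (atomsAbove P t) := by
    rw [sum_measureReal_singleton]
    exact measureReal_mono fun k hk => (Finset.mem_filter.mp hk).2
  have small : ∑ k ∈ S with k ∉ atomsAbove P t, P.real {k} ≤ captureNumber P δ * t :=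
    calc ∑ k ∈ S with k ∉ atomsAbove P t, P.real {k}
        ≤ (S.filter (· ∉ atomsAbove P t)).card • t :=
          Finset.sum_le_card_nsmul _ _ _ fun k hk => (not_le.mp (Finset.mem_filter.mp hk).2).le
      _ ≤ captureNumber P δ * t := by
          rw [nsmul_eq_mul]
          gcongr
          exact (Finset.card_filter_le _ _).trans card_le
  linarith

lemma captureNumber_pos (hδ : δ ∈ Ioo 0 1) : 0 < captureNumber P δ := by
  obtain ⟨S, card_le, hS⟩ := exists_finset_card_le_captureNumber (P := P) hδ.1
  refine (Finset.card_pos.mpr (Finset.nonempty_iff_ne_empty.mpr ?_)).trans_le card_le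
  rintro rfl
  simp only [Finset.coe_empty, compl_empty, probReal_univ] at hS
  exact hS.not_gt hδ.2

end CaptureNumber

section Reduction

variable {ι : Type*} {l : Filter ι} {K : ι → Type*} [∀ i, MeasurableSpace (K i)]
  [∀ i, MeasurableSingletonClass (K i)] [∀ i, Countable (K i)] {P : ∀ i, Measure (K i)}
  [∀ i, IsProbabilityMeasure (P i)] {a b : ι → ℝ} {δ x y c : ℝ}

lemma log_captureNumber_le {i : ι} (hδ : δ ∈ Ioo 0 1)
    (h : 1 - δ ≤ (P i).real (atomsAbove (P i) (Real.exp (-y)))) :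
    Real.log (captureNumber (P i) δ) ≤ y := by
  rw [Real.log_le_iff_le_exp (by exact_mod_cast captureNumber_pos hδ)]
  simpa [Real.exp_neg, ← div_eq_mul_inv, div_le_one (Real.exp_pos y)] using
    captureNumber_mul_le_one (Real.exp_pos (-y)) h

lemma add_log_le_log_captureNumber {i : ι} (hδ : δ ∈ Ioo 0 1) (hc : c < 1 - δ)
    (h : (P i).real (atomsAbove (P i) (Real.exp (-y))) ≤ c) :
    y + Real.log (1 - δ - c) ≤ Real.log (captureNumber (P i) δ) := by
  have pos : (0 : ℝ) < captureNumber (P i) δ := by exact_mod_cast captureNumber_pos hδ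
  have mass : 1 - δ - c ≤ captureNumber (P i) δ * Real.exp (-y) := by
    linarith [one_sub_le_measureReal_atomsAbove_add (P := P i) hδ.1 (Real.exp_pos (-y)).le]
  have log_mass := Real.log_le_log (sub_pos.mpr hc) mass
  rw [Real.log_mul pos.ne' (Real.exp_ne_zero _), Real.log_exp] at log_mass
  linarith

theorem tendsto_log_captureNumber {μ : Measure ℝ} [IsProbabilityMeasure μ] [μ.IsOpenPosMeasure]
    (hb : Tendsto b l atTop)
    (h : ∀ x, Tendsto (fun i => (P i).real (atomsAbove (P i) (Real.exp (-(a i + x * b i))))) l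
      (𝓝 (cdf μ x)))
    (hδ : δ ∈ Ioo 0 1) :
    Tendsto (fun i => (Real.log (captureNumber (P i) δ) - a i) / b i) l
      (𝓝 (quantile μ (1 - δ))) := by
  refine tendsto_order.mpr ⟨fun x hx => ?_, fun x hx => ?_⟩
  · obtain ⟨y, hxy, hy⟩ := exists_between hx
    obtain ⟨c, hyc, hc⟩ := exists_between (cdf_lt_of_lt_quantile (sub_pos.mpr hδ.2) hy)
    have correction : Tendsto (fun i => Real.log (1 - δ - c) / b i) l (𝓝 0) :=
      tendsto_const_nhds.div_atTop hb
    filter_upwards [hb.eventually_gt_atTop 0, (h y).eventually_lt_const hyc,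
      correction.eventually_const_lt (sub_neg.mpr hxy)] with i hbi hi hcorr
    have lower := add_log_le_log_captureNumber hδ hc hi.le
    rw [lt_div_iff₀ hbi] at hcorr ⊢
    linarith
  · obtain ⟨y, hy, hyx⟩ := exists_between hx
    filter_upwards [hb.eventually_gt_atTop 0,
      (h y).eventually_const_lt (lt_cdf_of_quantile_lt (by linarith [hδ.1]) hy)] with i hbi hi
    refine lt_of_le_of_lt ((div_le_iff₀ hbi).mpr ?_) hyx
    linarith [log_captureNumber_le hδ hi.le]

end Reduction

/-! ### Lyapunov's central limit theorem -/

section Lyapunov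

lemma norm_exp_mul_I_sub_taylor_le (x : ℝ) :
    ‖Complex.exp (x * Complex.I) - (1 + x * Complex.I - x ^ 2 / 2)‖ ≤ 3 * |x| ^ 3 := by
  have norm_ix : ‖(x : ℂ) * Complex.I‖ = |x| := by simp
  rcases le_total |x| 1 with hx | hx
  · have bound := Complex.exp_bound (norm_ix.trans_le hx) (n := 3) (by norm_num)
    have taylor : ∑ m ∈ Finset.range 3, ((x : ℂ) * Complex.I) ^ m / m.factorial
        = 1 + x * Complex.I - x ^ 2 / 2 := by
      simp [Finset.sum_range_succ, mul_pow, Nat.factorial]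
      ring
    rw [taylor, norm_ix] at bound
    refine bound.trans ?_
    norm_num [Nat.factorial]
    nlinarith [pow_nonneg (abs_nonneg x) 3]
  · have norm_exp : ‖Complex.exp (x * Complex.I) - 1‖ ≤ |x| := by
      simpa [mul_comm] using Real.norm_exp_I_mul_ofReal_sub_one_le (x := x)
    have norm_sq : ‖(x : ℂ) ^ 2 / 2‖ = |x| ^ 2 / 2 := by simp
    calc ‖Complex.exp (x * Complex.I) - (1 + x * Complex.I - x ^ 2 / 2)‖
        = ‖Complex.exp (x * Complex.I) - 1 - x * Complex.I + x ^ 2 / 2‖ := by ring_nf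
      _ ≤ |x| + |x| + |x| ^ 2 / 2 := by
          refine norm_add_le_of_le (norm_sub_le_of_le norm_exp norm_ix.le) norm_sq.le
      _ ≤ 3 * |x| ^ 3 := by
          have h₁ : |x| ≤ |x| ^ 3 := le_self_pow₀ hx (by norm_num)
          have h₂ : |x| ^ 2 ≤ |x| ^ 3 := pow_le_pow_right₀ hx (by norm_num)
          linarith

lemma abs_exp_neg_sub_one_sub_le {u : ℝ} (hu : 0 ≤ u) : |Real.exp (-u) - (1 - u)| ≤ u ^ 2 := by
  rcases le_total u 1 with h | h
  · have := Real.abs_exp_sub_one_sub_id_le (x := -u) (by rwa [abs_neg, abs_of_nonneg hu])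
    rw [neg_sq] at this
    convert this using 2
    ring
  · have lower : 1 - u ≤ Real.exp (-u) := Real.one_sub_le_exp_neg u
    have upper : Real.exp (-u) ≤ 1 := Real.exp_le_one_iff.mpr (by linarith)
    rw [abs_of_nonneg (by linarith)]
    nlinarith

lemma norm_prod_sub_prod_le {ι A : Type*} [NormedCommRing A] [NormOneClass A] (s : Finset ι)
    {f g : ι → A} (hf : ∀ i ∈ s, ‖f i‖ ≤ 1) (hg : ∀ i ∈ s, ‖g i‖ ≤ 1) :
    ‖∏ i ∈ s, f i - ∏ i ∈ s, g i‖ ≤ ∑ i ∈ s, ‖f i - g i‖ := by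
  induction s using Finset.cons_induction with
  | empty => simp
  | cons i s hi ih =>
    simp only [Finset.forall_mem_cons] at hf hg
    have prod_le : ‖∏ j ∈ s, f j‖ ≤ 1 :=
      (Finset.norm_prod_le _ _).trans (Finset.prod_le_one (fun _ _ => norm_nonneg _) hf.2)
    rw [Finset.prod_cons, Finset.prod_cons, Finset.sum_cons]
    calc ‖f i * ∏ j ∈ s, f j - g i * ∏ j ∈ s, g j‖
        = ‖(f i - g i) * ∏ j ∈ s, f j + g i * (∏ j ∈ s, f j - ∏ j ∈ s, g j)‖ := by ring_nf
      _ ≤ ‖f i - g i‖ * 1 + 1 * ∑ j ∈ s, ‖f j - g j‖ :=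
          norm_add_le_of_le (norm_mul_le_of_le le_rfl prod_le)
            (norm_mul_le_of_le hg.1 (ih hf.2 hg.2))
      _ = ‖f i - g i‖ + ∑ j ∈ s, ‖f j - g j‖ := by ring

section Moments

variable {Ω : Type*} [MeasurableSpace Ω] {P : Measure Ω} [IsProbabilityMeasure P] {X : Ω → ℝ}

lemma sq_integral_sq_le_mul_integral_abs_cube (hX : MemLp X 3 P) :
    (∫ ω, X ω ^ 2 ∂P) ^ 2 ≤ (1 + ∫ ω, X ω ^ 2 ∂P) * ∫ ω, |X ω| ^ 3 ∂P := by
  have int_sq : Integrable (fun ω => X ω ^ 2) P :=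
    (hX.mono_exponent (by norm_num : (2 : ENNReal) ≤ 3)).integrable_sq
  have int_cube : Integrable (fun ω => |X ω| ^ 3) P := hX.integrable_norm_pow (by norm_num)
  set v := ∫ ω, X ω ^ 2 ∂P
  set ρ := ∫ ω, |X ω| ^ 3 ∂P
  have v_nonneg : 0 ≤ v := integral_nonneg fun ω => sq_nonneg _
  -- minimises `s ^ 2 * (1 + v) - 2 * s * v`
  let s := v / (1 + v)
  have pointwise (x : ℝ) : 2 * s * x ^ 2 ≤ |x| ^ 3 + s ^ 2 * (1 + x ^ 2) := by
    have am_gm : 2 * s * |x| ^ 2 ≤ |x| ^ 3 + s ^ 2 * |x| := by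
      linarith [mul_nonneg (abs_nonneg x) (sq_nonneg (|x| - s))]
    have abs_le : |x| ≤ 1 + |x| ^ 2 := by linarith [sq_nonneg (|x| - 1), abs_nonneg x]
    rw [← sq_abs x]
    linarith [mul_le_mul_of_nonneg_left abs_le (sq_nonneg s)]
  have int_dominating : Integrable (fun ω => s ^ 2 * (1 + X ω ^ 2)) P :=
    ((integrable_const 1).add int_sq).const_mul _
  have integrated : 2 * s * v ≤ ρ + s ^ 2 * (1 + v) :=
    calc 2 * s * v = ∫ ω, 2 * s * X ω ^ 2 ∂P := (integral_const_mul _ _).symm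
      _ ≤ ∫ ω, (|X ω| ^ 3 + s ^ 2 * (1 + X ω ^ 2)) ∂P :=
          integral_mono (int_sq.const_mul _) (int_cube.add int_dominating) fun ω => pointwise _
      _ = ρ + s ^ 2 * (1 + v) := by
          rw [integral_add int_cube int_dominating, integral_const_mul,
            integral_add (integrable_const 1) int_sq, integral_const, probReal_univ, one_smul]
  have optimum : 2 * s * v - s ^ 2 * (1 + v) = v ^ 2 / (1 + v) := by
    simp only [s]
    field_simp
    ring
  rw [← div_le_iff₀' (by positivity)]
  linarith

lemma norm_integral_exp_mul_I_sub_taylor_le (hX : MemLp X 3 P) (hX₀ : ∫ ω, X ω ∂P = 0) :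
    ‖∫ ω, Complex.exp (X ω * Complex.I) ∂P - (1 - (∫ ω, X ω ^ 2 ∂P) / 2 : ℝ)‖
      ≤ 3 * ∫ ω, |X ω| ^ 3 ∂P := by
  have int_exp : Integrable (fun ω => Complex.exp (X ω * Complex.I)) P :=
    (integrable_const (1 : ℝ)).mono'
      ((by fun_prop : Continuous fun x : ℝ => Complex.exp (x * Complex.I)).comp_aestronglyMeasurable
        hX.1) (ae_of_all _ fun ω => (Complex.norm_exp_ofReal_mul_I _).le)
  have int_lin : Integrable (fun ω => (X ω : ℂ) * Complex.I) P :=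
    (hX.integrable (by norm_num)).ofReal.mul_const _
  have int_quad : Integrable (fun ω => (X ω : ℂ) ^ 2 / 2) P := by
    have int_sq := (hX.mono_exponent (by norm_num : (2 : ENNReal) ≤ 3)).integrable_sq
    exact ((int_sq.ofReal (𝕜 := ℂ)).div_const 2).congr (ae_of_all _ fun ω => by simp)
  have int_affine : Integrable (fun ω => 1 + (X ω : ℂ) * Complex.I) P :=
    (integrable_const 1).add int_lin
  have integral_taylor : ∫ ω, (1 + X ω * Complex.I - X ω ^ 2 / 2 : ℂ) ∂P
      = (1 - (∫ ω, X ω ^ 2 ∂P) / 2 : ℝ) := by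
    rw [integral_sub int_affine int_quad, integral_add (integrable_const 1) int_lin,
      integral_mul_const, integral_div, integral_const, probReal_univ, one_smul]
    simp only [← Complex.ofReal_pow, integral_complex_ofReal, hX₀]
    simp
  have int_taylor : Integrable (fun ω => (1 + X ω * Complex.I - X ω ^ 2 / 2 : ℂ)) P :=
    int_affine.sub int_quad
  rw [← integral_taylor, ← integral_sub int_exp int_taylor, ← integral_const_mul]
  exact norm_integral_le_of_norm_le ((hX.integrable_norm_pow (by norm_num)).const_mul 3)
    (ae_of_all _ fun ω => norm_exp_mul_I_sub_taylor_le _)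

lemma norm_integral_exp_mul_I_sub_exp_le (hX : MemLp X 3 P) (hX₀ : ∫ ω, X ω ∂P = 0) :
    ‖∫ ω, Complex.exp (X ω * Complex.I) ∂P - Complex.exp (-((∫ ω, X ω ^ 2 ∂P) / 2 : ℝ))‖
      ≤ (4 + ∫ ω, X ω ^ 2 ∂P) * ∫ ω, |X ω| ^ 3 ∂P := by
  set v := ∫ ω, X ω ^ 2 ∂P
  set ρ := ∫ ω, |X ω| ^ 3 ∂P
  have v_nonneg : 0 ≤ v := integral_nonneg fun ω => sq_nonneg _
  have gaussian : ‖((1 - v / 2 : ℝ) : ℂ) - Complex.exp (-(v / 2 : ℝ))‖ ≤ (1 + v) * ρ := by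
    rw [norm_sub_rev, ← Complex.ofReal_neg, ← Complex.ofReal_exp, ← Complex.ofReal_sub,
      Complex.norm_real, Real.norm_eq_abs]
    calc |Real.exp (-(v / 2)) - (1 - v / 2)| ≤ (v / 2) ^ 2 :=
          abs_exp_neg_sub_one_sub_le (by positivity)
      _ ≤ v ^ 2 := by gcongr; linarith
      _ ≤ (1 + v) * ρ := sq_integral_sq_le_mul_integral_abs_cube hX
  calc ‖∫ ω, Complex.exp (X ω * Complex.I) ∂P - Complex.exp (-(v / 2 : ℝ))‖
      ≤ 3 * ρ + (1 + v) * ρ := norm_sub_le_norm_sub_add_norm_sub _ _ _ |>.trans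
        (add_le_add (norm_integral_exp_mul_I_sub_taylor_le hX hX₀) gaussian)
    _ = (4 + v) * ρ := by ring

lemma norm_charFun_map_sub_exp_le (hX : MemLp X 3 P) (hX₀ : ∫ ω, X ω ∂P = 0) (t : ℝ) :
    ‖charFun (P.map X) t - Complex.exp (-(t ^ 2 * (∫ ω, X ω ^ 2 ∂P) / 2 : ℝ))‖
      ≤ (4 + t ^ 2 * ∫ ω, X ω ^ 2 ∂P) * (|t| ^ 3 * ∫ ω, |X ω| ^ 3 ∂P) := by
  have bound := norm_integral_exp_mul_I_sub_exp_le (hX.const_mul t)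
    (by rw [integral_const_mul, hX₀, mul_zero])
  simp only [mul_pow, abs_mul, integral_const_mul] at bound
  rwa [charFun_apply_real, integral_map hX.1.aemeasurable (by fun_prop),
    integral_congr_ae (ae_of_all _ fun ω => by rw [← Complex.ofReal_mul])]

lemma norm_charFun_map_sum_sub_exp_le {ι : Type*} [Fintype ι] {X : ι → Ω → ℝ}
    (indep : iIndepFun X P) (hX : ∀ i, MemLp (X i) 3 P) (mean : ∀ i, ∫ ω, X i ω ∂P = 0) (t : ℝ) :
    ‖charFun (P.map fun ω => ∑ i, X i ω) t
        - Complex.exp (-(t ^ 2 * (∑ i, ∫ ω, X i ω ^ 2 ∂P) / 2 : ℝ))‖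
      ≤ (4 + t ^ 2 * ∑ i, ∫ ω, X i ω ^ 2 ∂P) * (|t| ^ 3 * ∑ i, ∫ ω, |X i ω| ^ 3 ∂P) := by
  have variance_nonneg (i : ι) : 0 ≤ ∫ ω, X i ω ^ 2 ∂P := integral_nonneg fun ω => sq_nonneg _
  have exp_sum : Complex.exp (-(t ^ 2 * (∑ i, ∫ ω, X i ω ^ 2 ∂P) / 2 : ℝ))
      = ∏ i, Complex.exp (-(t ^ 2 * (∫ ω, X i ω ^ 2 ∂P) / 2 : ℝ)) := by
    rw [← Complex.exp_sum]
    simp [Finset.mul_sum, Finset.sum_div]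
  have (i : ι) : IsProbabilityMeasure (P.map (X i)) :=
    Measure.isProbabilityMeasure_map (hX i).1.aemeasurable
  rw [indep.charFun_map_fun_sum_eq_prod fun i => (hX i).1.aemeasurable, Finset.prod_apply,
    exp_sum, Finset.mul_sum _ _ (|t| ^ 3), Finset.mul_sum]
  refine (norm_prod_sub_prod_le _ (fun i _ => norm_charFun_le_one t) fun i _ => ?_).trans ?_
  · rw [← Complex.ofReal_neg, Complex.norm_exp_ofReal, Real.exp_le_one_iff, neg_nonpos]
    exact div_nonneg (mul_nonneg (sq_nonneg t) (variance_nonneg i)) zero_le_two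
  · refine Finset.sum_le_sum fun i _ =>
      (norm_charFun_map_sub_exp_le (hX i) (mean i) t).trans ?_
    gcongr
    exact Finset.single_le_sum (fun i _ => variance_nonneg i) (Finset.mem_univ i)

end Moments

variable {ι Ω : ℕ → Type*} [∀ n, Fintype (ι n)] [∀ n, MeasurableSpace (Ω n)]
  {P : ∀ n, Measure (Ω n)} [∀ n, IsProbabilityMeasure (P n)] {X : ∀ n, ι n → Ω n → ℝ}

lemma tendsto_charFun_map_sum_of_lyapunov
    (indep : ∀ n, iIndepFun (X n) (P n)) (hX : ∀ n i, MemLp (X n i) 3 (P n))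
    (mean : ∀ n i, ∫ ω, X n i ω ∂P n = 0)
    (variance : Tendsto (fun n => ∑ i, ∫ ω, X n i ω ^ 2 ∂P n) atTop (𝓝 1))
    (lyapunov : Tendsto (fun n => ∑ i, ∫ ω, |X n i ω| ^ 3 ∂P n) atTop (𝓝 0)) (t : ℝ) :
    Tendsto (fun n => charFun ((P n).map fun ω => ∑ i, X n i ω) t) atTop
      (𝓝 (charFun (gaussianReal 0 1) t)) := by
  have limit_eq : charFun (gaussianReal 0 1) t = Complex.exp (-(t ^ 2 * 1 / 2 : ℝ)) := by
    simp [charFun_gaussianReal]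
  have tendsto_exp := (by fun_prop : Continuous fun s : ℝ =>
    Complex.exp (-(t ^ 2 * s / 2 : ℝ))).continuousAt.tendsto.comp variance
  have bound_tendsto := ((variance.const_mul (t ^ 2)).const_add 4).mul
    (lyapunov.const_mul (|t| ^ 3))
  rw [mul_zero, mul_zero] at bound_tendsto
  rw [limit_eq]
  simpa using (squeeze_zero_norm (fun n =>
    norm_charFun_map_sum_sub_exp_le (indep n) (hX n) (mean n) t) bound_tendsto).add tendsto_exp

theorem tendstoInDistribution_sum_of_lyapunov
    (indep : ∀ n, iIndepFun (X n) (P n)) (hX : ∀ n i, MemLp (X n i) 3 (P n))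
    (mean : ∀ n i, ∫ ω, X n i ω ∂P n = 0)
    (variance : Tendsto (fun n => ∑ i, ∫ ω, X n i ω ^ 2 ∂P n) atTop (𝓝 1))
    (lyapunov : Tendsto (fun n => ∑ i, ∫ ω, |X n i ω| ^ 3 ∂P n) atTop (𝓝 0)) :
    TendstoInDistribution (fun n ω => ∑ i, X n i ω) atTop id P (gaussianReal 0 1) where
  forall_aemeasurable n := Finset.aemeasurable_fun_sum _ fun i _ => (hX n i).1.aemeasurable
  tendsto := ProbabilityMeasure.tendsto_of_tendsto_charFun fun t => by
    simpa using tendsto_charFun_map_sum_of_lyapunov indep hX mean variance lyapunov t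

end Lyapunov

lemma tendsto_measureReal_le_of_tendstoInDistribution {ι : Type*} {l : Filter ι}
    {Ω : ι → Type*} [∀ i, MeasurableSpace (Ω i)] {P : ∀ i, Measure (Ω i)}
    [∀ i, IsProbabilityMeasure (P i)] {X : ∀ i, Ω i → ℝ} {μ : Measure ℝ} [IsProbabilityMeasure μ]
    [NullSingletonClass μ] (h : TendstoInDistribution X l id P μ) (x : ℝ) :
    Tendsto (fun i => (P i).real {ω | X i ω ≤ x}) l (𝓝 (cdf μ x)) := by
  have tendsto_law := ProbabilityMeasure.tendsto_measure_of_null_frontier_of_tendsto' h.tendsto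
    (E := Iic x) (by simp)
  simp only [ProbabilityMeasure.coe_mk, Measure.map_id] at tendsto_law
  rw [cdf_eq_real]
  refine ((ENNReal.tendsto_toReal (measure_ne_top μ _)).comp tendsto_law).congr fun i => ?_
  rw [Function.comp_apply, Measure.map_apply_of_aemeasurable (h.forall_aemeasurable i)
    measurableSet_Iic]
  rfl

/-! ### Multi-indices with independent geometric coordinates -/

section Geometric

/-- The odds `w / (1 - w)` of a probability `w`, which are the mean of the law
`n ↦ (1 - w) w ^ n` on `ℕ`. -/
noncomputable def odds (w : ℝ) : ℝ :=
  w / (1 - w)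

variable {w : I}

lemma odds_nonneg : 0 ≤ odds w :=
  div_nonneg w.2.1 (sub_nonneg.mpr w.2.2)

lemma geometricMeasure_symm_real_singleton (hw : w ≠ 1) (n : ℕ) :
    (geometricMeasure (σ w)).real {n} = (1 - w) * (w : ℝ) ^ n := by
  rw [geometricMeasure_real_singleton (by simpa using hw), unitInterval.coe_symm_eq,
    sub_sub_cancel, mul_comm]

lemma hasSum_choose_mul_geometric (hw : w ≠ 1) (k : ℕ) :
    HasSum (fun n : ℕ => (1 - w) * (w : ℝ) ^ n * n.choose k) (odds w ^ k) := by
  have w_lt_one : (w : ℝ) < 1 := unitInterval.lt_one_iff_ne_one.mpr hw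
  have shifted := (hasSum_choose_mul_geometric_of_norm_lt_one (r := (w : ℝ)) k
    (by rwa [Real.norm_of_nonneg w.2.1])).mul_left ((1 - w) * (w : ℝ) ^ k)
  rw [← hasSum_nat_add_iff' k, Finset.sum_eq_zero fun n hn => by
    rw [Nat.choose_eq_zero_of_lt (Finset.mem_range.mp hn), Nat.cast_zero, mul_zero], sub_zero]
  convert! shifted using 1
  · ext n
    rw [pow_add]
    ring
  · have : (1 : ℝ) - w ≠ 0 := (sub_pos.mpr w_lt_one).ne'
    rw [odds, div_pow]
    field_simp
    ring

lemma integrable_choose_geometricMeasure (hw : w ≠ 1) (k : ℕ) :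
    Integrable (fun n : ℕ => (n.choose k : ℝ)) (geometricMeasure (σ w)) := by
  rw [integrable_geometricMeasure_iff (by simpa using hw)]
  convert (hasSum_choose_mul_geometric hw k).summable using 2 with n
  rw [unitInterval.coe_symm_eq, sub_sub_cancel, Real.norm_natCast]
  ring

lemma integral_choose_geometricMeasure (hw : w ≠ 1) (k : ℕ) :
    ∫ n, (n.choose k : ℝ) ∂geometricMeasure (σ w) = odds w ^ k := by
  rw [integral_geometricMeasure (by simpa using hw), ← (hasSum_choose_mul_geometric hw k).tsum_eq]
  congr with n
  rw [unitInterval.coe_symm_eq, sub_sub_cancel, smul_eq_mul]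
  ring

lemma integral_sum_choose_geometricMeasure (hw : w ≠ 1) {N : ℕ} (c : Fin N → ℝ) :
    ∫ n, ∑ k, c k * n.choose k ∂geometricMeasure (σ w) = ∑ k, c k * odds w ^ (k : ℕ) := by
  rw [integral_finsetSum _ fun k _ => (integrable_choose_geometricMeasure hw _).const_mul _]
  simp only [integral_const_mul, integral_choose_geometricMeasure hw]

lemma natCast_sq_eq_choose (n : ℕ) : (n : ℝ) ^ 2 = 2 * n.choose 2 + n.choose 1 := by
  rw [Nat.cast_choose_two, Nat.choose_one_right]
  ring

lemma natCast_cube_eq_choose (n : ℕ) :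
    (n : ℝ) ^ 3 = 6 * n.choose 3 + 6 * n.choose 2 + n.choose 1 := by
  induction n with
  | zero => simp
  | succ n ih =>
    have pascal (k : ℕ) : ((n + 1).choose (k + 1) : ℝ) = n.choose k + n.choose (k + 1) := by
      rw [Nat.choose_succ_succ, Nat.cast_add]
    have sq := natCast_sq_eq_choose n
    simp only [pascal, Nat.choose_one_right, Nat.cast_add, Nat.cast_one] at ih sq ⊢
    linear_combination ih + 3 * sq

lemma integral_natCast_geometricMeasure (hw : w ≠ 1) :
    ∫ n, (n : ℝ) ∂geometricMeasure (σ w) = odds w := by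
  simpa using integral_choose_geometricMeasure hw 1

lemma integrable_natCast_geometricMeasure (hw : w ≠ 1) :
    Integrable (fun n : ℕ => (n : ℝ)) (geometricMeasure (σ w)) := by
  simpa using integrable_choose_geometricMeasure hw 1

lemma integrable_natCast_cube_geometricMeasure (hw : w ≠ 1) :
    Integrable (fun n : ℕ => (n : ℝ) ^ 3) (geometricMeasure (σ w)) := by
  simp only [natCast_cube_eq_choose]
  have int := integrable_choose_geometricMeasure hw
  exact (((int 3).const_mul 6).add ((int 2).const_mul 6)).add (int 1)

lemma integral_natCast_cube_geometricMeasure (hw : w ≠ 1) :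
    ∫ n : ℕ, (n : ℝ) ^ 3 ∂geometricMeasure (σ w)
      = odds w + 6 * odds w ^ 2 + 6 * odds w ^ 3 := by
  have expand (n : ℕ) : (n : ℝ) ^ 3 = ∑ k, ![0, 1, 6, 6] k * (n.choose k : ℝ) := by
    simp [natCast_cube_eq_choose, Fin.sum_univ_four]
    ring
  simp only [expand]
  rw [integral_sum_choose_geometricMeasure hw]
  simp [Fin.sum_univ_four]

lemma memLp_natCast_geometricMeasure (hw : w ≠ 1) :
    MemLp (fun n : ℕ => (n : ℝ)) 3 (geometricMeasure (σ w)) := by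
  rw [← integrable_norm_rpow_iff .of_discrete (by norm_num) (by norm_num)]
  simpa using integrable_natCast_cube_geometricMeasure hw

lemma integral_natCast_sub_odds_sq (hw : w ≠ 1) :
    ∫ n : ℕ, ((n : ℝ) - odds w) ^ 2 ∂geometricMeasure (σ w) = odds w + odds w ^ 2 := by
  have expand (n : ℕ) : ((n : ℝ) - odds w) ^ 2
      = ∑ k, ![odds w ^ 2, 1 - 2 * odds w, 2] k * (n.choose k : ℝ) := by
    simp [sub_sq, natCast_sq_eq_choose, Fin.sum_univ_three]
    ring
  simp only [expand]
  rw [integral_sum_choose_geometricMeasure hw]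
  simp [Fin.sum_univ_three]
  ring

lemma integral_abs_natCast_sub_odds_cube_le (hw : w ≠ 1) :
    ∫ n : ℕ, |(n : ℝ) - odds w| ^ 3 ∂geometricMeasure (σ w)
      ≤ 7 * (odds w + odds w ^ 2 + odds w ^ 3) := by
  have m_nonneg : 0 ≤ odds w := odds_nonneg
  have int_cube := integrable_natCast_cube_geometricMeasure hw
  have abs_sub_cube_le (n : ℕ) : |(n : ℝ) - odds w| ^ 3 ≤ (n : ℝ) ^ 3 + odds w ^ 3 := by
    rcases abs_cases ((n : ℝ) - odds w) with ⟨h, _⟩ | ⟨h, _⟩ <;> rw [h]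
    · have : ((n : ℝ) - odds w) ^ 3 ≤ n ^ 3 := by gcongr; linarith
      linarith [pow_nonneg m_nonneg 3]
    · have : (-((n : ℝ) - odds w)) ^ 3 ≤ odds w ^ 3 := by
        gcongr
        · linarith
        · linarith [n.cast_nonneg (α := ℝ)]
      linarith [pow_nonneg (n.cast_nonneg (α := ℝ)) 3]
  calc ∫ n : ℕ, |(n : ℝ) - odds w| ^ 3 ∂geometricMeasure (σ w)
      ≤ ∫ n : ℕ, ((n : ℝ) ^ 3 + odds w ^ 3) ∂geometricMeasure (σ w) :=
        integral_mono_of_nonneg (ae_of_all _ fun n => by positivity)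
          (int_cube.add (integrable_const _)) (ae_of_all _ abs_sub_cube_le)
    _ = odds w + 6 * odds w ^ 2 + 7 * odds w ^ 3 := by
        rw [integral_add int_cube (integrable_const _), integral_const, probReal_univ, one_smul,
          integral_natCast_cube_geometricMeasure hw]
        ring
    _ ≤ 7 * (odds w + odds w ^ 2 + odds w ^ 3) := by
        linarith [sq_nonneg (odds w)]

end Geometric

section Eigenvalues

variable {ω : ℕ → I} {d : ℕ} {ε : ℝ}

/-- The law on multi-indices whose masses are the eigenvalues
`λ_d(k) = ∏_{j<d} (1 - ω_j) ω_j ^ k_j`. -/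
noncomputable def eigenMeasure (ω : ℕ → I) (d : ℕ) : Measure (Fin d → ℕ) :=
  Measure.pi fun j => geometricMeasure (σ (ω j))

instance : IsProbabilityMeasure (eigenMeasure ω d) := by
  unfold eigenMeasure
  infer_instance

lemma eigenMeasure_real_singleton (hω : ∀ j, ω j ≠ 1) (k : Fin d → ℕ) :
    (eigenMeasure ω d).real {k} = ∏ j : Fin d, (1 - ω j) * (ω j : ℝ) ^ k j := by
  rw [eigenMeasure, measureReal_def, Measure.pi_singleton, ENNReal.toReal_prod]
  exact Finset.prod_congr rfl fun j _ => geometricMeasure_symm_real_singleton (hω j) (k j)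

lemma tsum_eigenvalues_notMem (hω : ∀ j, ω j ≠ 1) (S : Finset (Fin d → ℕ)) :
    ∑' k : {k // k ∉ S}, ∏ j : Fin d, (1 - ω j) * (ω j : ℝ) ^ k.1 j
      = (eigenMeasure ω d).real (S : Set (Fin d → ℕ))ᶜ := by
  simp only [← eigenMeasure_real_singleton hω]
  exact tsum_measureReal_singleton_notMem S

lemma avgComplexity_eq_captureNumber (hω : ∀ j, ω j ≠ 1) (hε : ε ^ 2 < 1) :
    avgComplexity (fun j => ω j) d ε = captureNumber (eigenMeasure ω d) (ε ^ 2) := by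
  rw [avgComplexity, captureNumber]
  congr 1 with n
  simp only [tsum_eigenvalues_notMem hω, mem_ofPred_eq, and_iff_right_iff_imp]
  rintro ⟨S, card_le, hS⟩
  refine (Finset.card_pos.mpr (Finset.nonempty_iff_ne_empty.mpr ?_)).trans_le card_le
  rintro rfl
  simp only [Finset.coe_empty, compl_empty, probReal_univ] at hS
  exact hS.not_gt hε

/-- The centred contribution of the coordinate `j` to `-log λ_d(k)`, in units of `s`. -/
noncomputable def surprisal (ω : ℕ → I) (s : ℝ) (j : Fin d) (k : Fin d → ℕ) : ℝ :=
  |Real.log (ω j)| / s * (k j - odds (ω j))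

lemma neg_log_eigenMeasure_sub_aSeq (hω : ∀ j, ω j ∈ Ioo 0 1) (k : Fin d → ℕ) :
    -Real.log ((eigenMeasure ω d).real {k}) - aSeq (fun j => ω j) d
      = ∑ j : Fin d, |Real.log (ω j)| * (k j - odds (ω j)) := by
  have pos (j : ℕ) : (0 : ℝ) < ω j := (hω j).1
  have lt_one (j : ℕ) : (ω j : ℝ) < 1 := (hω j).2
  have sub_pos (j : ℕ) : (0 : ℝ) < 1 - ω j := sub_pos.mpr (lt_one j)
  rw [eigenMeasure_real_singleton fun j => (hω j).2.ne,
    Real.log_prod fun (j : Fin d) _ => (mul_pos (sub_pos j) (pow_pos (pos j) (k j))).ne', aSeq,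
    Finset.sum_range, ← Finset.sum_neg_distrib, ← Finset.sum_sub_distrib]
  refine Finset.sum_congr rfl fun j _ => ?_
  rw [Real.log_mul (sub_pos j).ne' (pow_pos (pos j) _).ne', Real.log_pow,
    abs_of_neg (Real.log_neg (pos j) (lt_one j)),
    abs_of_neg (Real.log_neg (sub_pos j) (sub_lt_self 1 (pos j))), odds]
  ring

lemma setOf_sum_surprisal_le (hω : ∀ j, ω j ∈ Ioo 0 1) {s : ℝ} (hs : 0 < s) (x : ℝ) :
    {k : Fin d → ℕ | ∑ j, surprisal ω s j k ≤ x} = atomsAbove (eigenMeasure ω d)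
      (Real.exp (-(aSeq (fun j => ω j) d + x * s))) := by
  ext k
  have pos : 0 < (eigenMeasure ω d).real {k} := by
    rw [eigenMeasure_real_singleton fun j => (hω j).2.ne]
    exact Finset.prod_pos fun j _ => mul_pos (sub_pos.mpr (hω j).2) (pow_pos (hω j).1 _)
  have sum_eq : ∑ j, surprisal ω s j k
      = (-Real.log ((eigenMeasure ω d).real {k}) - aSeq (fun j => ω j) d) / s := by
    simp only [neg_log_eigenMeasure_sub_aSeq hω, Finset.sum_div, surprisal, div_mul_eq_mul_div]
  rw [mem_ofPred_eq, sum_eq, div_le_iff₀ hs, atomsAbove, mem_ofPred_eq,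
    ← Real.le_log_iff_exp_le pos]
  constructor <;> intro h <;> linarith

section Moments

variable (hω : ∀ j, ω j ≠ 1) (s : ℝ) (j : Fin d)
include hω

lemma memLp_surprisal : MemLp (surprisal ω s j) 3 (eigenMeasure ω d) :=
  (((memLp_natCast_geometricMeasure (hω j)).sub (memLp_const _)).const_mul _).comp_measurePreserving
    (measurePreserving_eval _ j)

lemma integral_surprisal : ∫ k, surprisal ω s j k ∂eigenMeasure ω d = 0 := by
  refine (integral_comp_eval (μ := fun j : Fin d => geometricMeasure (σ (ω j))) (i := j)
    (f := fun n : ℕ => |Real.log (ω j)| / s * (n - odds (ω j))) .of_discrete).trans ?_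
  rw [integral_const_mul, integral_sub (integrable_natCast_geometricMeasure (hω j))
    (integrable_const _), integral_natCast_geometricMeasure (hω j)]
  simp

lemma integral_surprisal_sq : ∫ k, surprisal ω s j k ^ 2 ∂eigenMeasure ω d
    = (odds (ω j) + odds (ω j) ^ 2) * |Real.log (ω j)| ^ 2 / s ^ 2 := by
  refine (integral_comp_eval (μ := fun j : Fin d => geometricMeasure (σ (ω j))) (i := j)
    (f := fun n : ℕ => (|Real.log (ω j)| / s * (n - odds (ω j))) ^ 2) .of_discrete).trans ?_
  simp only [mul_pow, integral_const_mul, integral_natCast_sub_odds_sq (hω j)]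
  ring

lemma integral_abs_surprisal_cube_le (hs : 0 < s) :
    ∫ k, |surprisal ω s j k| ^ 3 ∂eigenMeasure ω d
      ≤ 7 * ((odds (ω j) + odds (ω j) ^ 2 + odds (ω j) ^ 3) * |Real.log (ω j)| ^ 3 / s ^ 3) := by
  refine (integral_comp_eval (μ := fun j : Fin d => geometricMeasure (σ (ω j))) (i := j)
    (f := fun n : ℕ => |(|Real.log (ω j)| / s * (n - odds (ω j)))| ^ 3) .of_discrete).trans_le ?_
  simp only [abs_mul, abs_div, abs_abs, abs_of_pos hs, mul_pow, integral_const_mul]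
  calc (|Real.log (ω j)| / s) ^ 3 * ∫ n : ℕ, |(n : ℝ) - odds (ω j)| ^ 3 ∂geometricMeasure (σ (ω j))
      ≤ (|Real.log (ω j)| / s) ^ 3 * (7 * (odds (ω j) + odds (ω j) ^ 2 + odds (ω j) ^ 3)) := by
        gcongr
        exact integral_abs_natCast_sub_odds_cube_le (hω j)
    _ = _ := by ring

end Moments

lemma iIndepFun_surprisal (ω : ℕ → I) (s : ℝ) :
    iIndepFun (surprisal (d := d) ω s) (eigenMeasure ω d) :=
  iIndepFun_pi (μ := fun j : Fin d => geometricMeasure (σ (ω j)))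
    (X := fun j (n : ℕ) => |Real.log (ω j)| / s * (n - odds (ω j))) fun _ => .of_discrete

theorem tendstoInDistribution_sum_surprisal (hω : ∀ j, ω j ≠ 1) {b : ℕ → ℝ}
    (hb : Tendsto b atTop atTop)
    (variance : Tendsto (fun d => (∑ j ∈ Finset.range d,
      (odds (ω j) + odds (ω j) ^ 2) * |Real.log (ω j)| ^ 2) / b d ^ 2) atTop (𝓝 1))
    (lyapunov : Tendsto (fun d => (∑ j ∈ Finset.range d,
      (odds (ω j) + odds (ω j) ^ 2 + odds (ω j) ^ 3) * |Real.log (ω j)| ^ 3) / b d ^ 3)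
      atTop (𝓝 0)) :
    TendstoInDistribution (fun d (k : Fin d → ℕ) => ∑ j, surprisal ω (b d) j k) atTop id
      (eigenMeasure ω) (gaussianReal 0 1) := by
  refine tendstoInDistribution_sum_of_lyapunov (fun d => iIndepFun_surprisal ω (b d))
    (fun d j => memLp_surprisal hω (b d) j) (fun d j => integral_surprisal hω (b d) j) ?_ ?_
  · simpa only [integral_surprisal_sq hω, Finset.sum_div, Finset.sum_range] using variance
  · have bound_tendsto := lyapunov.const_mul 7
    rw [mul_zero] at bound_tendsto
    refine squeeze_zero' (.of_forall fun d => Finset.sum_nonneg fun j _ =>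
      integral_nonneg fun k => by positivity) ?_ bound_tendsto
    filter_upwards [hb.eventually_gt_atTop 0] with d hd
    rw [Finset.sum_range, Finset.sum_div, Finset.mul_sum]
    exact Finset.sum_le_sum fun j _ => integral_abs_surprisal_cube_le hω (b d) j hd

theorem tendsto_log_avgComplexity (hω : ∀ j, ω j ∈ Ioo 0 1) {b : ℕ → ℝ} (hb : Tendsto b atTop atTop)
    (variance : Tendsto (fun d => (∑ j ∈ Finset.range d,
      (odds (ω j) + odds (ω j) ^ 2) * |Real.log (ω j)| ^ 2) / b d ^ 2) atTop (𝓝 1))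
    (lyapunov : Tendsto (fun d => (∑ j ∈ Finset.range d,
      (odds (ω j) + odds (ω j) ^ 2 + odds (ω j) ^ 3) * |Real.log (ω j)| ^ 3) / b d ^ 3) atTop (𝓝 0))
    (hε : ε ∈ Ioo 0 1) :
    Tendsto (fun d => (Real.log (avgComplexity (fun j => ω j) d ε) - aSeq (fun j => ω j) d) / b d)
      atTop (𝓝 (stdGaussianQuantile (1 - ε ^ 2))) := by
  have : (gaussianReal 0 1).IsOpenPosMeasure :=
    (gaussianReal_absolutelyContinuous' 0 one_ne_zero).isOpenPosMeasure
  have : NullSingletonClass (gaussianReal 0 1) := nullSingletonClass_gaussianReal one_ne_zero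
  have ne_one (j : ℕ) : ω j ≠ 1 := (hω j).2.ne
  have sq_lt_one : ε ^ 2 < 1 := pow_lt_one₀ hε.1.le hε.2 two_ne_zero
  have law := tendsto_measureReal_le_of_tendstoInDistribution
    (tendstoInDistribution_sum_surprisal ne_one hb variance lyapunov)
  simp only [avgComplexity_eq_captureNumber ne_one sq_lt_one]
  refine tendsto_log_captureNumber hb (fun x => (law x).congr' ?_) ⟨pow_pos hε.1 2, sq_lt_one⟩
  filter_upwards [hb.eventually_gt_atTop 0] with d hd
  rw [setOf_sum_surprisal_le hω hd]

end Eigenvalues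

/-! ### Asymptotics of weighted sums -/

section Asymptotics

lemma isEquivalent_sum_range {u g : ℕ → ℝ} (h : u ~[atTop] g) (hg : 0 ≤ g)
    (diverges : Tendsto (fun n => ∑ j ∈ Finset.range n, g j) atTop atTop) :
    (fun n => ∑ j ∈ Finset.range n, u j) ~[atTop] fun n => ∑ j ∈ Finset.range n, g j := by
  have := h.isLittleO.sum_range hg diverges
  simpa only [Pi.sub_apply, Finset.sum_sub_distrib] using! this

section Increments

variable {u v : ℝ → ℝ} {a b p : ℝ}

lemma tendsto_mul_mul_sub_one (hu : Tendsto (fun x => x * (u x - 1)) atTop (𝓝 a))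
    (hv : Tendsto (fun x => x * (v x - 1)) atTop (𝓝 b)) :
    Tendsto (fun x => x * (u x * v x - 1)) atTop (𝓝 (a + b)) := by
  have hu_sub : Tendsto (fun x => u x - 1) atTop (𝓝 0) := by
    refine (hu.div_atTop tendsto_id).congr' ?_
    filter_upwards [eventually_ne_atTop 0] with x hx
    exact mul_div_cancel_left₀ _ hx
  have := (hu.add hv).add (hu_sub.mul hv)
  rw [zero_mul, add_zero] at this
  exact this.congr fun x => by ring

lemma tendsto_mul_pow_sub_one (hu : Tendsto (fun x => x * (u x - 1)) atTop (𝓝 a)) (k : ℕ) :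
    Tendsto (fun x => x * (u x ^ k - 1)) atTop (𝓝 (k * a)) := by
  induction k with
  | zero => simp
  | succ k ih =>
    simpa only [pow_succ, Nat.cast_succ, add_one_mul] using tendsto_mul_mul_sub_one ih hu

lemma tendsto_mul_rpow_one_add_inv_sub_one (p : ℝ) :
    Tendsto (fun x : ℝ => x * ((1 + x⁻¹) ^ p - 1)) atTop (𝓝 p) := by
  have deriv := Real.hasDerivAt_rpow_const (x := 1) (p := p) (.inl one_ne_zero)
  simp only [Real.one_rpow, mul_one] at deriv
  simpa [Function.comp_def] using deriv.tendsto_slope_zero_right.comp tendsto_inv_atTop_nhdsGT_zero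

lemma tendsto_mul_log_add_one_div_log_sub_one :
    Tendsto (fun x : ℝ => x * (Real.log (x + 1) / Real.log x - 1)) atTop (𝓝 0) := by
  refine ((Real.tendsto_mul_log_one_add_div_atTop 1).div_atTop Real.tendsto_log_atTop).congr' ?_
  filter_upwards [eventually_gt_atTop 1] with x hx
  have hx₀ : x ≠ 0 := by positivity
  have log_pos := Real.log_pos hx
  rw [one_add_div hx₀, Real.log_div (by positivity) hx₀]
  field_simp

lemma isEquivalent_increment_rpow_mul_log_pow (hp : p ≠ 0) (k : ℕ) :
    (fun x : ℝ => (x + 1) ^ p * Real.log (x + 1) ^ k - x ^ p * Real.log x ^ k) ~[atTop]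
      fun x => p * (x ^ (p - 1) * Real.log x ^ k) := by
  have limit := (tendsto_mul_mul_sub_one (tendsto_mul_rpow_one_add_inv_sub_one p)
    (tendsto_mul_pow_sub_one tendsto_mul_log_add_one_div_log_sub_one k)).div_const p
  rw [mul_zero, add_zero, div_self hp] at limit
  refine isEquivalent_of_tendsto_one (limit.congr' ?_)
  filter_upwards [eventually_gt_atTop 1] with x hx
  have hx₀ : 0 < x := by positivity
  have log_pos := Real.log_pos hx
  have rpow_add_one : (x + 1) ^ p = (1 + x⁻¹) ^ p * x ^ p := by
    rw [← Real.mul_rpow (by positivity) hx₀.le]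
    congr 1
    field_simp
  rw [Pi.div_apply, rpow_add_one, Real.rpow_sub_one hx₀.ne', div_pow]
  field_simp

end Increments

lemma tendsto_natCast_rpow_mul_log_pow_atTop {p : ℝ} (hp : 0 < p) (k : ℕ) :
    Tendsto (fun n : ℕ => (n : ℝ) ^ p * Real.log n ^ k) atTop atTop := by
  refine tendsto_atTop_mono' _ ?_ ((tendsto_rpow_atTop hp).comp tendsto_natCast_atTop_atTop)
  filter_upwards [(Real.tendsto_log_atTop.comp tendsto_natCast_atTop_atTop).eventually_ge_atTop 1]
    with n hn
  exact le_mul_of_one_le_right (Real.rpow_nonneg n.cast_nonneg p) (one_le_pow₀ hn)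

theorem isEquivalent_sum_range_rpow_mul_log_pow {p : ℝ} (hp : 0 < p) (k : ℕ) :
    (fun n => ∑ j ∈ Finset.range n, (j : ℝ) ^ (p - 1) * Real.log j ^ k) ~[atTop]
      fun n : ℕ => p⁻¹ * ((n : ℝ) ^ p * Real.log n ^ k) := by
  let F (n : ℕ) : ℝ := n ^ p * Real.log n ^ k
  have telescope (n : ℕ) : ∑ j ∈ Finset.range n, p⁻¹ * (F (j + 1) - F j) = p⁻¹ * F n := by
    rw [← Finset.mul_sum, Finset.sum_range_sub]
    simp [F, Real.zero_rpow hp.ne']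
  have increment : (fun j : ℕ => (j : ℝ) ^ (p - 1) * Real.log j ^ k) ~[atTop]
      fun j => p⁻¹ * (F (j + 1) - F j) := by
    have := (IsEquivalent.refl (u := fun _ : ℕ => p⁻¹)).mul
      ((isEquivalent_increment_rpow_mul_log_pow hp.ne' k).comp_tendsto tendsto_natCast_atTop_atTop)
    simpa [F, Pi.mul_def, Function.comp_def, hp.ne'] using this.symm
  have monotone (j : ℕ) : F j ≤ F (j + 1) := by
    rcases j.eq_zero_or_pos with rfl | hj
    · simp [F, Real.zero_rpow hp.ne']
    · have := Real.log_natCast_nonneg j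
      simp only [F]
      gcongr <;> simp
  have := isEquivalent_sum_range increment
    (fun j => mul_nonneg (inv_nonneg.mpr hp.le) (sub_nonneg.mpr (monotone j)))
  simp only [telescope] at this
  exact this ((tendsto_natCast_rpow_mul_log_pow_atTop hp k).const_mul_atTop (inv_pos.mpr hp))

section Odds

lemma isEquivalent_odds : odds ~[𝓝 0] id := by
  have factor : Tendsto (fun w : ℝ => (1 - w)⁻¹) (𝓝 0) (𝓝 (1 - 0)⁻¹) :=
    (tendsto_id.const_sub 1).inv₀ (by norm_num)
  rw [sub_zero, inv_one, ← isEquivalent_const_iff_tendsto one_ne_zero] at factor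
  refine (factor.mul IsEquivalent.refl).congr_left (.of_forall fun w => ?_) |>.congr_right
    (.of_forall fun w => one_mul w)
  exact (div_eq_inv_mul w (1 - w)).symm

lemma tendsto_odds_nhds_zero : Tendsto odds (𝓝 0) (𝓝 0) :=
  isEquivalent_odds.symm.tendsto_nhds tendsto_id

lemma isEquivalent_odds_add_sq : (fun w => odds w + odds w ^ 2) ~[𝓝 0] id :=
  (IsEquivalent.refl.add_isLittleO ((isLittleO_pow_id one_lt_two).comp_tendsto
    tendsto_odds_nhds_zero)).trans isEquivalent_odds

lemma isEquivalent_odds_add_sq_add_cube :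
    (fun w => odds w + odds w ^ 2 + odds w ^ 3) ~[𝓝 0] id :=
  ((IsEquivalent.refl.add_isLittleO ((isLittleO_pow_id one_lt_two).comp_tendsto
    tendsto_odds_nhds_zero)).add_isLittleO ((isLittleO_pow_id (by norm_num)).comp_tendsto
    tendsto_odds_nhds_zero)).trans isEquivalent_odds

end Odds

section OmegaFn

lemma omegaFn_mem_Ioo {s : ℝ} (hs : s ≠ 0) : omegaFn s ∈ Ioo 0 1 := by
  have one_lt : 1 < 1 + s ^ 2 / 2 * (1 + √(1 + 4 / s ^ 2)) := by
    have : 0 < s ^ 2 := by positivity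
    exact lt_add_of_pos_right _ (by positivity)
  exact ⟨inv_pos.mpr (one_pos.trans one_lt), inv_lt_one_of_one_lt₀ one_lt⟩

lemma isEquivalent_omegaFn : omegaFn ~[atTop] fun s => (s ^ 2)⁻¹ := by
  suffices (fun s : ℝ => 1 + s ^ 2 / 2 * (1 + √(1 + 4 / s ^ 2))) ~[atTop] fun s => s ^ 2 from
    this.inv
  have sq_atTop : Tendsto (fun s : ℝ => s ^ 2) atTop atTop := tendsto_pow_atTop two_ne_zero
  have sqrt_tendsto : Tendsto (fun s : ℝ => √(1 + 4 / s ^ 2)) atTop (𝓝 1) := by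
    simpa using ((tendsto_const_nhds (x := (4 : ℝ)).div_atTop sq_atTop).const_add 1).sqrt
  have limit := (tendsto_const_nhds (x := (1 : ℝ)).div_atTop sq_atTop).add
    ((sqrt_tendsto.const_add 1).div_const 2)
  norm_num at limit
  refine isEquivalent_of_tendsto_one (limit.congr' ?_)
  filter_upwards [eventually_ne_atTop 0] with s hs
  rw [Pi.div_apply]
  field_simp

end OmegaFn

section PolynomialScale

variable {ω : ℕ → ℝ} {α β : ℝ}

lemma isEquivalent_omegaFn_comp {s : ℕ → ℝ} (hs : ∀ j, 0 ≤ s j) (hα : 0 < α) (hβ : 0 < β)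
    (h : (fun j => s j ^ 2) ~[atTop] fun j => β * (j : ℝ) ^ α) :
    (fun j => omegaFn (s j)) ~[atTop] fun j => (β * (j : ℝ) ^ α)⁻¹ := by
  have sq_atTop : Tendsto (fun j => s j ^ 2) atTop atTop := h.symm.tendsto_atTop
    (((tendsto_rpow_atTop hα).comp tendsto_natCast_atTop_atTop).const_mul_atTop hβ)
  have s_atTop : Tendsto s atTop atTop :=
    (Real.tendsto_sqrt_atTop.comp sq_atTop).congr fun j => Real.sqrt_sq (hs j)
  exact (isEquivalent_omegaFn.comp_tendsto s_atTop).trans h.inv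

lemma tendsto_nhds_zero_of_isEquivalent (hα : 0 < α) (hβ : 0 < β)
    (h : ω ~[atTop] fun j => (β * (j : ℝ) ^ α)⁻¹) : Tendsto ω atTop (𝓝 0) :=
  h.symm.tendsto_nhds (((tendsto_rpow_atTop hα).comp
    tendsto_natCast_atTop_atTop).const_mul_atTop hβ).inv_tendsto_atTop

lemma isEquivalent_abs_log (hα : 0 < α) (hβ : 0 < β)
    (h : ω ~[atTop] fun j => (β * (j : ℝ) ^ α)⁻¹) :
    (fun j => |Real.log (ω j)|) ~[atTop] fun j => α * Real.log j := by
  have scale_atTop : Tendsto (fun j : ℕ => β * (j : ℝ) ^ α) atTop atTop :=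
    ((tendsto_rpow_atTop hα).comp tendsto_natCast_atTop_atTop).const_mul_atTop hβ
  have log_atTop : Tendsto (fun j : ℕ => α * Real.log j) atTop atTop :=
    (Real.tendsto_log_atTop.comp tendsto_natCast_atTop_atTop).const_mul_atTop hα
  have log_scale : (fun j : ℕ => Real.log (β * (j : ℝ) ^ α)) ~[atTop] fun j => α * Real.log j := by
    refine (IsEquivalent.refl.const_add_of_norm_tendsto_atTop (c := Real.log β)
      (tendsto_norm_atTop_atTop.comp log_atTop)).congr_left ?_
    filter_upwards [eventually_gt_atTop 0] with j hj
    have : (0 : ℝ) < j := Nat.cast_pos.mpr hj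
    rw [Real.log_mul hβ.ne' (by positivity), Real.log_rpow this]
  have log_inv : (fun j => Real.log (ω j)⁻¹) ~[atTop] fun j => Real.log (β * (j : ℝ) ^ α) := by
    have : ω⁻¹ ~[atTop] fun j => β * (j : ℝ) ^ α := by simpa [Pi.inv_def] using h.inv
    exact this.log scale_atTop
  refine (log_inv.trans log_scale).congr_left ?_
  filter_upwards [(log_inv.trans log_scale).symm.tendsto_atTop log_atTop |>.eventually_ge_atTop 0]
    with j hj
  rw [← abs_of_nonneg hj, Real.log_inv, abs_neg]

theorem isEquivalent_sum_range_mul_abs_log_pow {w : ℕ → ℝ} (hα : α ∈ Ioo 0 1) (hβ : 0 < β)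
    (h : ω ~[atTop] fun j => (β * (j : ℝ) ^ α)⁻¹) (hw : w ~[atTop] ω) (k : ℕ) :
    (fun d => ∑ j ∈ Finset.range d, w j * |Real.log (ω j)| ^ k) ~[atTop]
      fun d => α ^ k / ((1 - α) * β) * ((d : ℝ) ^ (1 - α) * Real.log d ^ k) := by
  have term : (fun j => w j * |Real.log (ω j)| ^ k) ~[atTop]
      fun j : ℕ => α ^ k / β * ((j : ℝ) ^ (1 - α - 1) * Real.log j ^ k) := by
    refine ((hw.trans h).mul ((isEquivalent_abs_log hα.1 hβ h).pow k)).congr_right ?_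
    refine .of_forall fun j => ?_
    simp only [Pi.mul_apply, Pi.pow_apply]
    rw [sub_right_comm, sub_self, zero_sub, Real.rpow_neg j.cast_nonneg]
    ring
  have power_sum := isEquivalent_sum_range_rpow_mul_log_pow (sub_pos.mpr hα.2) k
  have power_sum_atTop := power_sum.symm.tendsto_atTop
    ((tendsto_natCast_rpow_mul_log_pow_atTop (sub_pos.mpr hα.2) k).const_mul_atTop
      (inv_pos.mpr (sub_pos.mpr hα.2)))
  have coeff_pos : 0 < α ^ k / β := div_pos (pow_pos hα.1 k) hβ
  have sum_term := isEquivalent_sum_range term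
    (fun j => by have := Real.log_natCast_nonneg j; simp only [Pi.zero_apply]; positivity)
    (by simpa only [← Finset.mul_sum] using power_sum_atTop.const_mul_atTop coeff_pos)
  simp only [← Finset.mul_sum] at sum_term
  refine (sum_term.trans (IsEquivalent.refl.mul power_sum)).congr_right (.of_forall fun d => ?_)
  simp only [Pi.mul_apply]
  field_simp

end PolynomialScale

end Asymptotics

section NormalizingSequence

variable {α β : ℝ}

/-- The normalising sequence `b_d` of the central limit theorem when `ω_j ~ (β j ^ α)⁻¹`. -/
noncomputable def normalizer (α β : ℝ) (d : ℕ) : ℝ :=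
  α / √((1 - α) * β) * (d : ℝ) ^ ((1 - α) / 2) * Real.log d

lemma normalizer_sq (hα : α ≤ 1) (hβ : 0 ≤ β) (d : ℕ) :
    normalizer α β d ^ 2 = α ^ 2 / ((1 - α) * β) * ((d : ℝ) ^ (1 - α) * Real.log d ^ 2) := by
  have rpow_sq : ((d : ℝ) ^ ((1 - α) / 2)) ^ 2 = (d : ℝ) ^ (1 - α) := by
    rw [← Real.rpow_mul_natCast d.cast_nonneg, Nat.cast_ofNat, div_mul_cancel₀ _ two_ne_zero]
  rw [normalizer, mul_pow, mul_pow, div_pow, rpow_sq,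
    Real.sq_sqrt (mul_nonneg (sub_nonneg.mpr hα) hβ), mul_assoc]

lemma tendsto_normalizer_atTop (hα : α ∈ Ioo 0 1) (hβ : 0 < β) :
    Tendsto (normalizer α β) atTop atTop := by
  have coeff_pos : 0 < α / √((1 - α) * β) :=
    div_pos hα.1 (Real.sqrt_pos.mpr (mul_pos (sub_pos.mpr hα.2) hβ))
  have exponent_pos : 0 < (1 - α) / 2 := half_pos (sub_pos.mpr hα.2)
  refine ((tendsto_natCast_rpow_mul_log_pow_atTop exponent_pos 1).const_mul_atTop
    coeff_pos).congr fun d => ?_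
  rw [normalizer, pow_one, mul_assoc]

lemma tendsto_log_div_normalizer (hα : α < 1) :
    Tendsto (fun d : ℕ => α * Real.log d / normalizer α β d) atTop (𝓝 0) := by
  have power_atTop : Tendsto (fun d : ℕ => (d : ℝ) ^ ((1 - α) / 2)) atTop atTop :=
    (tendsto_rpow_atTop (half_pos (sub_pos.mpr hα))).comp tendsto_natCast_atTop_atTop
  refine (tendsto_const_nhds (x := α / (α / √((1 - α) * β))).div_atTop power_atTop).congr' ?_
  filter_upwards [eventually_gt_atTop 1] with d hd
  have log_ne_zero : Real.log d ≠ 0 := (Real.log_pos (Nat.one_lt_cast.mpr hd)).ne'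
  rw [normalizer, mul_div_mul_right _ _ log_ne_zero, div_div]

variable {ω w : ℕ → ℝ}

lemma tendsto_sum_sq_div_normalizer_sq (hα : α ∈ Ioo 0 1) (hβ : 0 < β)
    (h : ω ~[atTop] fun j => (β * (j : ℝ) ^ α)⁻¹) (hw : w ~[atTop] ω) :
    Tendsto (fun d => (∑ j ∈ Finset.range d, w j * |Real.log (ω j)| ^ 2) / normalizer α β d ^ 2)
      atTop (𝓝 1) := by
  have sum_sq := isEquivalent_sum_range_mul_abs_log_pow hα hβ h hw 2
  simp only [← normalizer_sq hα.2.le hβ.le] at sum_sq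
  refine (isEquivalent_iff_tendsto_one ?_).mp sum_sq
  filter_upwards [(tendsto_normalizer_atTop hα hβ).eventually_gt_atTop 0] with d hd
  positivity

lemma tendsto_sum_cube_div_normalizer_cube (hα : α ∈ Ioo 0 1) (hβ : 0 < β)
    (h : ω ~[atTop] fun j => (β * (j : ℝ) ^ α)⁻¹) (hw : w ~[atTop] ω) :
    Tendsto (fun d => (∑ j ∈ Finset.range d, w j * |Real.log (ω j)| ^ 3) / normalizer α β d ^ 3)
      atTop (𝓝 0) := by
  have sum_cube := (isEquivalent_sum_range_mul_abs_log_pow hα hβ h hw 3).div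
    (IsEquivalent.refl (u := fun d => normalizer α β d ^ 3))
  refine sum_cube.symm.tendsto_nhds ((tendsto_log_div_normalizer (β := β) hα.2).congr' ?_)
  filter_upwards [(tendsto_normalizer_atTop hα hβ).eventually_gt_atTop 0] with d hd
  have cube_eq : α ^ 3 / ((1 - α) * β) * ((d : ℝ) ^ (1 - α) * Real.log d ^ 3)
      = normalizer α β d ^ 2 * (α * Real.log d) := by
    rw [normalizer_sq hα.2.le hβ.le]
    ring
  rw [Pi.div_apply, cube_eq]
  field_simp

theorem tendsto_log_avgComplexity_of_isEquivalent {ω : ℕ → ℝ} (hω : ∀ j, ω j ∈ Ioo 0 1)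
    (hα : α ∈ Ioo 0 1) (hβ : 0 < β) (h : ω ~[atTop] fun j => (β * (j : ℝ) ^ α)⁻¹) {ε : ℝ}
    (hε : ε ∈ Ioo 0 1) :
    Tendsto (fun d => (Real.log (avgComplexity ω d ε) - aSeq ω d) / normalizer α β d)
      atTop (𝓝 (stdGaussianQuantile (1 - ε ^ 2))) := by
  have ω_zero := tendsto_nhds_zero_of_isEquivalent hα.1 hβ h
  exact tendsto_log_avgComplexity (ω := fun j => ⟨ω j, Ioo_subset_Icc_self (hω j)⟩) hω
    (tendsto_normalizer_atTop hα hβ)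
    (tendsto_sum_sq_div_normalizer_sq hα hβ h (isEquivalent_odds_add_sq.comp_tendsto ω_zero))
    (tendsto_sum_cube_div_normalizer_cube hα hβ h
      (isEquivalent_odds_add_sq_add_cube.comp_tendsto ω_zero)) hε

end NormalizingSequence

end AverageCase

/-- If `σ_j² ~ β j^α` with `α ∈ (0,1)`, then `ln n_d(ε) = a_d + Φ⁻¹(1-ε²) b_d + o(b_d)`
with `b_d = (α/√((1-α)β)) d^{(1-α)/2} ln d`. -/
theorem logAsymptotics_polynomial_scale (σseq : ℕ → ℝ) (hpos : ∀ j, 0 < σseq j)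
    (α β : ℝ) (hα : α ∈ Set.Ioo (0 : ℝ) 1) (hβ : 0 < β)
    (hasymp : Tendsto (fun j : ℕ => (σseq j) ^ 2 / (β * (j : ℝ) ^ α)) atTop (nhds 1)) :
    ∀ ε ∈ Set.Ioo (0 : ℝ) 1,
      Tendsto (fun d : ℕ =>
          (Real.log (avgComplexity (fun j => omegaFn (σseq j)) d ε)
              - aSeq (fun j => omegaFn (σseq j)) d)
            / (α / Real.sqrt ((1 - α) * β) * (d : ℝ) ^ ((1 - α) / 2) * Real.log d))
        atTop (nhds (stdGaussianQuantile (1 - ε ^ 2))) := by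
  intro ε hε
  have ω_mem (j : ℕ) : omegaFn (σseq j) ∈ Ioo 0 1 := AverageCase.omegaFn_mem_Ioo (hpos j).ne'
  have σ_sq : (fun j => σseq j ^ 2) ~[atTop] fun j => β * (j : ℝ) ^ α :=
    isEquivalent_of_tendsto_one hasymp
  have ω_asymp : (fun j => omegaFn (σseq j)) ~[atTop] fun j => (β * (j : ℝ) ^ α)⁻¹ :=
    AverageCase.isEquivalent_omegaFn_comp (fun j => (hpos j).le) hα.1 hβ σ_sq
  exact AverageCase.tendsto_log_avgComplexity_of_isEquivalent ω_mem hα hβ ω_asymp hε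
end
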